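/- arXiv:2511.09577 — 9 statements merged into one kernel-verified Lean document; each statement's English description precedes it below -/
import Mathlib

section
/- Let m ≥ 1, let u be an m×m real symmetric matrix and v an m×m real symmetric positive definite matrix, and set x = u + iv (an m×m complex symmetric matrix). Then the matrix x + iI_m is invertible, and the matrix w = (x − iI_m)(x + iI_m)^{-1} is complex symmetric and satisfies that I_m − w wᴴ is Hermitian positive definite; i.e., the matrix Cayley transformation maps the Siegel upper half space into the Siegel disk. -/
open Matrix
open scoped ComplexOrder

/-!
Write `a = x + i` and `b = x - i`. In any complex star algebra `a a* - b b* = 4 ℑ x`. Since `a` and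
`b` commute, the Cayley transform is `w = a⁻¹ b`, so `1 - w w* = a⁻¹ (4 ℑ x) (a⁻¹)*` is congruent to
a positive multiple of `ℑ x`. Invertibility of `a` holds because `ℑ a = ℑ x + 1` is positive
definite: a vector `y` with `a y = 0` satisfies `y* (ℑ a) y = 0`.
-/

open Complex (I)
open scoped ComplexStarModule

section StarModule

variable {A : Type*} [AddCommGroup A] [Module ℂ A] [StarAddMonoid A] [StarModule ℂ A]

lemma imaginaryPart_add_I_smul {a b : A} (ha : IsSelfAdjoint a) (hb : IsSelfAdjoint b) :
    (ℑ (a + I • b) : A) = b := by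
  rw [map_add, ha.imaginaryPart, imaginaryPart_I_smul, zero_add, hb.coe_realPart]

end StarModule

section StarAlgebra

variable {A : Type*} [Ring A] [StarRing A] [Algebra ℂ A] [StarModule ℂ A]

lemma imaginaryPart_add_I_smul_one (a : A) : (ℑ (a + I • 1) : A) = ℑ a + 1 := by
  rw [map_add, imaginaryPart_I_smul, AddSubgroup.coe_add, IsSelfAdjoint.one A |>.coe_realPart]

lemma mul_star_add_I_smul_one_sub_mul_star_sub_I_smul_one (a : A) :
    (a + I • 1) * star (a + I • 1) - (a - I • 1) * star (a - I • 1) = (4 : ℝ) • (ℑ a : A) := by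
  have hI : star (I • (1 : A)) = -(I • 1) := by
    rw [star_smul, star_one, Complex.star_def, Complex.conj_I, neg_smul]
  calc (a + I • 1) * star (a + I • 1) - (a - I • 1) * star (a - I • 1)
      = (2 * I) • star a - (2 * I) • a := by
        simp only [star_add, star_sub, hI, add_mul, mul_add, sub_mul, mul_sub, mul_neg,
          smul_mul_assoc, mul_smul_comm, one_mul, mul_one]
        module
    _ = (4 : ℝ) • (ℑ a : A) := by
        rw [imaginaryPart_apply_coe]
        module

end StarAlgebra

variable {n : Type*}

open scoped MatrixOrder in
lemma posDef_map_algebraMap [Finite n] {𝕜 : Type*} [RCLike 𝕜] {v : Matrix n n ℝ}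
    (hv : v.PosDef) : (v.map (algebraMap ℝ 𝕜)).PosDef := by
  classical
  have := Fintype.ofFinite n
  obtain ⟨b, hb, rfl⟩ :=
    CStarAlgebra.isStrictlyPositive_iff_eq_star_mul_self.mp hv.isStrictlyPositive
  have hb' : IsUnit (b.map (algebraMap ℝ 𝕜)) := hb.map (algebraMap ℝ 𝕜).mapMatrix
  have hstar : (star b * b).map (algebraMap ℝ 𝕜) =
      (b.map (algebraMap ℝ 𝕜))ᴴ * b.map (algebraMap ℝ 𝕜) := by
    rw [star_eq_conjTranspose, Matrix.map_mul, conjTranspose_map]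
    exact algebraMap_star_comm
  rw [hstar]
  exact PosDef.conjTranspose_mul_self _ (mulVec_injective_of_isUnit hb')

lemma posDef_imaginaryPart_ofReal_add_I_smul_ofReal [Finite n] {u v : Matrix n n ℝ}
    (hu : u.IsSymm) (hv : v.PosDef) :
    (ℑ (u.map ((↑) : ℝ → ℂ) + I • v.map ((↑) : ℝ → ℂ)) : Matrix n n ℂ).PosDef := by
  have hU : (u.map ((↑) : ℝ → ℂ)).IsHermitian :=
    (isHermitian_iff_isSymm.mpr hu).map _ fun r ↦ (Complex.conj_ofReal r).symm
  have hV : (v.map ((↑) : ℝ → ℂ)).PosDef := posDef_map_algebraMap hv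
  rwa [imaginaryPart_add_I_smul hU.isSelfAdjoint hV.isHermitian.isSelfAdjoint]

variable [Fintype n] [DecidableEq n]

lemma isUnit_of_posDef_imaginaryPart {a : Matrix n n ℂ} (ha : (ℑ a : Matrix n n ℂ).PosDef) :
    IsUnit a := by
  rw [← mulVec_injective_iff_isUnit, ← coe_mulVecLin, injective_iff_map_eq_zero]
  intro y hy
  rw [mulVecLin_apply] at hy
  by_contra hy₀
  have hstar : star y ⬝ᵥ (aᴴ *ᵥ y) = 0 := by
    rw [dotProduct_mulVec, ← star_mulVec, hy, star_zero, zero_dotProduct]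
  refine (ha.dotProduct_mulVec_pos hy₀).ne' ?_
  rw [imaginaryPart_apply_coe, star_eq_conjTranspose, smul_mulVec, smul_mulVec, sub_mulVec, hy,
    zero_sub, dotProduct_smul, dotProduct_smul, dotProduct_neg, hstar, neg_zero, smul_zero,
    smul_zero]

lemma isUnit_add_I_smul_one {x : Matrix n n ℂ} (hx : (ℑ x : Matrix n n ℂ).PosSemidef) :
    IsUnit (x + I • (1 : Matrix n n ℂ)) := by
  apply isUnit_of_posDef_imaginaryPart
  rw [imaginaryPart_add_I_smul_one]
  exact PosDef.posSemidef_add hx PosDef.one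

/-- The matrix Cayley transform `φ_C(x) = (x - i)(x + i)⁻¹`, which maps the Siegel upper half space
into the Siegel disk. It takes the junk value `0` where `x + i` is singular. -/
noncomputable def cayleyTransform (x : Matrix n n ℂ) : Matrix n n ℂ :=
  (x - I • 1) * (x + I • 1)⁻¹

lemma cayleyTransform_eq_inv_mul (x : Matrix n n ℂ) :
    cayleyTransform x = (x + I • 1)⁻¹ * (x - I • 1) := by
  have hcomm : Commute (x - I • 1) (x + I • 1) :=
    .add_right (.sub_left (.refl x) (.smul_left (.one_left x) I)) (.smul_right (.one_right _) I)
  simpa only [cayleyTransform, Matrix.zpow_neg_one] using (Matrix.Commute.zpow_right hcomm (-1)).eq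

lemma isSymm_cayleyTransform {x : Matrix n n ℂ} (hx : x.IsSymm) : (cayleyTransform x).IsSymm := by
  have hI : (I • (1 : Matrix n n ℂ)).IsSymm := isSymm_one.smul I
  rw [IsSymm, cayleyTransform, transpose_mul, transpose_nonsing_inv, (hx.add hI).eq,
    (hx.sub hI).eq, ← cayleyTransform_eq_inv_mul, cayleyTransform]

lemma one_sub_cayleyTransform_mul_star {x : Matrix n n ℂ}
    (hx : IsUnit (x + I • (1 : Matrix n n ℂ))) :
    1 - cayleyTransform x * star (cayleyTransform x) =
      (x + I • 1)⁻¹ * ((4 : ℝ) • (ℑ x : Matrix n n ℂ)) * star (x + I • 1)⁻¹ := by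
  have hinv : (x + I • 1)⁻¹ * (x + I • 1) = 1 :=
    nonsing_inv_mul _ ((isUnit_iff_isUnit_det _).mp hx)
  have hone : (x + I • 1)⁻¹ * ((x + I • 1) * star (x + I • 1)) * star (x + I • 1)⁻¹ = 1 := by
    rw [← mul_assoc, hinv, one_mul, ← star_mul, hinv, star_one]
  rw [← mul_star_add_I_smul_one_sub_mul_star_sub_I_smul_one, mul_sub, sub_mul, hone,
    cayleyTransform_eq_inv_mul, star_mul]
  simp only [mul_assoc]

lemma posDef_one_sub_cayleyTransform_mul_star {x : Matrix n n ℂ}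
    (hx : (ℑ x : Matrix n n ℂ).PosDef) :
    (1 - cayleyTransform x * star (cayleyTransform x)).PosDef := by
  have hunit := isUnit_add_I_smul_one hx.posSemidef
  rw [one_sub_cayleyTransform_mul_star hunit,
    IsUnit.posDef_star_right_conjugate_iff (isUnit_nonsing_inv_iff.mpr hunit)]
  exact hx.smul (by norm_num)

theorem cayley_maps_SH_to_SD_general {x : Matrix n n ℂ} (hx : (ℑ x : Matrix n n ℂ).PosDef) :
    IsUnit (x + I • (1 : Matrix n n ℂ)) ∧
    (x.IsSymm → (cayleyTransform x).IsSymm) ∧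
    (1 - cayleyTransform x * (cayleyTransform x)ᴴ).PosDef :=
  ⟨isUnit_add_I_smul_one hx.posSemidef, isSymm_cayleyTransform,
    posDef_one_sub_cayleyTransform_mul_star hx⟩

/-- the matrix Cayley transformation maps the Siegel upper half
space into the Siegel disk. -/
theorem cayley_maps_SH_to_SD (m : ℕ) (hm : 1 ≤ m)
    (u v : Matrix (Fin m) (Fin m) ℝ) (hu : uᵀ = u) (hv : v.PosDef)
    (x : Matrix (Fin m) (Fin m) ℂ)
    (hx : x = u.map ((↑) : ℝ → ℂ) + Complex.I • v.map ((↑) : ℝ → ℂ))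
    (w : Matrix (Fin m) (Fin m) ℂ)
    (hw : w = (x - Complex.I • (1 : Matrix (Fin m) (Fin m) ℂ)) *
      (x + Complex.I • (1 : Matrix (Fin m) (Fin m) ℂ))⁻¹) :
    IsUnit (x + Complex.I • (1 : Matrix (Fin m) (Fin m) ℂ)) ∧
    wᵀ = w ∧
    ((1 : Matrix (Fin m) (Fin m) ℂ) - w * wᴴ).PosDef := by
  subst hx hw
  have hsymm : (u.map ((↑) : ℝ → ℂ) + I • v.map ((↑) : ℝ → ℂ)).IsSymm :=
    (IsSymm.map hu _).add (((isHermitian_iff_isSymm.mp hv.isHermitian).map _).smul I)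
  obtain ⟨hunit, hcayley, hpos⟩ :=
    cayley_maps_SH_to_SD_general (posDef_imaginaryPart_ofReal_add_I_smul_ofReal hu hv)
  exact ⟨hunit, hcayley hsymm, hpos⟩
end

section
/- Let m ≥ 1 and let w be an m×m complex symmetric matrix such that I_m − w wᴴ is Hermitian positive definite. Then I_m − w is invertible, and the matrix x = i(I_m + w)(I_m − w)^{-1} is complex symmetric with real symmetric real part and real symmetric positive definite imaginary part; i.e., the inverse matrix Cayley transformation maps the Siegel disk into the Siegel upper half space. -/
open Matrix
open scoped ComplexOrder

/-!
If `1 - w * wᴴ` is positive definite, then a row vector `y` with `y * w = y` satisfies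
`y * (1 - w * wᴴ) * yᴴ = 0`, so `y = 0` and `1 - w` is invertible. Write `B = (1 - w)⁻¹`. Since
`1 + w` commutes with `B`, the matrix `x = I • ((1 + w) * B)` is symmetric when `w` is. Dividing
`(1 + w) * (1 - w)ᴴ + (1 - w) * (1 + w)ᴴ = 2 * (1 - w * wᴴ)` by `1 - w` on the left and by
`(1 - w)ᴴ` on the right shows `(x - xᴴ) / (2 * I) = B * (1 - w * wᴴ) * Bᴴ`, which is congruent to
a positive definite matrix.
-/

section Complexification

open scoped ComplexStarModule

variable {m n 𝕜 : Type*}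

theorem map_re_add_I_smul_map_im (x : Matrix m n ℂ) :
    (x.map Complex.re).map ((↑) : ℝ → ℂ) +
      Complex.I • (x.map Complex.im).map ((↑) : ℝ → ℂ) = x := by
  ext i j
  simp only [Matrix.add_apply, Matrix.smul_apply, map_apply, smul_eq_mul, mul_comm Complex.I,
    Complex.re_add_im]

theorem coe_imaginaryPart_of_isSymm {x : Matrix n n ℂ} (hx : x.IsSymm) :
    (ℑ x : Matrix n n ℂ) = (x.map Complex.im).map ((↑) : ℝ → ℂ) := by
  ext i j
  rw [imaginaryPart_apply_coe]
  apply Complex.ext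
  · simp [hx.apply i j, ← two_mul]
  · simp [hx.apply i j]

theorem posDef_of_posDef_map_ofReal [RCLike 𝕜] {v : Matrix n n ℝ}
    (hv : (v.map ((↑) : ℝ → 𝕜)).PosDef) : v.PosDef := by
  refine ⟨?_, fun y hy => ?_⟩
  · ext i j
    simpa using hv.isHermitian.apply i j
  · have hy' : y.mapRange ((↑) : ℝ → 𝕜) RCLike.ofReal_zero ≠ 0 := fun h =>
      hy (Finsupp.mapRange_injective _ _ RCLike.ofReal_injective (by simpa using h))
    have hcast : ((y.mapRange ((↑) : ℝ → 𝕜) RCLike.ofReal_zero).sum fun i a =>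
        (y.mapRange ((↑) : ℝ → 𝕜) RCLike.ofReal_zero).sum fun j b =>
          star a * v.map ((↑) : ℝ → 𝕜) i j * b) =
        ((y.sum fun i a => y.sum fun j b => star a * v i j * b : ℝ) : 𝕜) := by
      simp [Finsupp.sum, Finsupp.support_mapRange_of_injective _ _ RCLike.ofReal_injective]
    rw [← RCLike.ofReal_pos (K := 𝕜), ← hcast]
    exact hv.2 hy'

end Complexification

section Cayley

open scoped ComplexStarModule

variable {n R α 𝕜 : Type*}

theorem one_add_mul_star_add_one_sub_mul_star [Ring R] [StarRing R] (w : R) :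
    (1 + w) * star (1 - w) + (1 - w) * star (1 + w) = 2 * (1 - w * star w) := by
  simp only [star_add, star_sub, star_one]
  noncomm_ring

variable [Fintype n] [DecidableEq n]

theorem eq_zero_of_vecMul_eq_self [Ring R] [PartialOrder R] [StarRing R] {w : Matrix n n R}
    (hw : (1 - w * wᴴ).PosDef) {y : n → R} (hy : y ᵥ* w = y) : y = 0 := by
  by_contra hy0
  have hform : y ⬝ᵥ ((1 - w * wᴴ) *ᵥ star y) = 0 := by
    rw [sub_mulVec, one_mulVec, ← mulVec_mulVec, ← star_vecMul, hy, dotProduct_sub,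
      dotProduct_mulVec, hy, sub_self]
  have hpos := hw.dotProduct_mulVec_pos (star_ne_zero.mpr hy0)
  rw [star_star, hform] at hpos
  exact hpos.false

theorem isUnit_one_sub_of_posDef [Field 𝕜] [PartialOrder 𝕜] [StarRing 𝕜] {w : Matrix n n 𝕜}
    (hw : (1 - w * wᴴ).PosDef) : IsUnit (1 - w) := by
  refine vecMul_injective_iff_isUnit.mp fun y z hyz => sub_eq_zero.mp ?_
  have hfixed : (y - z) ᵥ* (1 - w) = 0 := by rw [sub_vecMul, sub_eq_zero]; exact hyz
  rw [vecMul_sub, vecMul_one, sub_eq_zero] at hfixed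
  exact eq_zero_of_vecMul_eq_self hw hfixed.symm

theorem commute_one_add_inv_one_sub [CommRing α] (w : Matrix n n α) :
    Commute (1 + w) (1 - w)⁻¹ := by
  have h : Commute (1 + w) (1 - w) :=
    (Commute.one_left _).add_left ((Commute.one_right w).sub_right (.refl w))
  simpa only [Matrix.zpow_neg_one] using Matrix.Commute.zpow_right h (-1)

/-- The inverse matrix Cayley transformation, which carries the Siegel disk to the Siegel upper half
space. It takes the junk value `0` when `1 - w` is singular. -/
noncomputable def inverseCayley (w : Matrix n n ℂ) : Matrix n n ℂ :=
  Complex.I • ((1 + w) * (1 - w)⁻¹)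

theorem isSymm_inverseCayley {w : Matrix n n ℂ} (hw : w.IsSymm) : (inverseCayley w).IsSymm := by
  refine IsSymm.smul ?_ _
  rw [IsSymm, transpose_mul, (isSymm_one.sub hw).inv.eq, (isSymm_one.add hw).eq,
    (commute_one_add_inv_one_sub w).eq]

theorem coe_imaginaryPart_inverseCayley {w : Matrix n n ℂ} (hw : IsUnit (1 - w)) :
    (ℑ (inverseCayley w) : Matrix n n ℂ) = (1 - w)⁻¹ * (1 - w * wᴴ) * ((1 - w)⁻¹)ᴴ := by
  have hdet := (isUnit_iff_isUnit_det _).mp hw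
  have hleft : (1 - w)⁻¹ * (1 - w) = 1 := nonsing_inv_mul _ hdet
  have hright : (1 - w)ᴴ * ((1 - w)⁻¹)ᴴ = 1 := by
    rw [← conjTranspose_mul, hleft, conjTranspose_one]
  calc
    (ℑ (inverseCayley w) : Matrix n n ℂ)
        = (2⁻¹ : ℝ) • ((1 - w)⁻¹ * (1 + w) + (1 + w)ᴴ * ((1 - w)⁻¹)ᴴ) := by
      rw [imaginaryPart_apply_coe, inverseCayley, (commute_one_add_inv_one_sub w).eq]
      rw [star_eq_conjTranspose, conjTranspose_smul, conjTranspose_mul, Complex.star_def,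
        Complex.conj_I, neg_smul, neg_smul, sub_neg_eq_add, ← smul_add, smul_comm (2⁻¹ : ℝ),
        smul_smul, Complex.I_mul_I, neg_one_smul, neg_neg]
    _ = (2⁻¹ : ℝ) • ((1 - w)⁻¹ * ((1 + w) * (1 - w)ᴴ + (1 - w) * (1 + w)ᴴ) * ((1 - w)⁻¹)ᴴ) := by
      have hcancel_right : (1 - w)⁻¹ * ((1 + w) * (1 - w)ᴴ) * ((1 - w)⁻¹)ᴴ =
          (1 - w)⁻¹ * (1 + w) := by
        rw [mul_assoc, mul_assoc, hright, mul_one]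
      have hcancel_left : (1 - w)⁻¹ * ((1 - w) * (1 + w)ᴴ) * ((1 - w)⁻¹)ᴴ =
          (1 + w)ᴴ * ((1 - w)⁻¹)ᴴ := by
        rw [← mul_assoc, hleft, one_mul]
      rw [mul_add _ (_ * _), add_mul _ _ ((1 - w)⁻¹)ᴴ, hcancel_right, hcancel_left]
    _ = (2⁻¹ : ℝ) • (2 * ((1 - w)⁻¹ * (1 - w * wᴴ) * ((1 - w)⁻¹)ᴴ)) := by
      simp only [← star_eq_conjTranspose]
      rw [one_add_mul_star_add_one_sub_mul_star]
      noncomm_ring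
    _ = (1 - w)⁻¹ * (1 - w * wᴴ) * ((1 - w)⁻¹)ᴴ := by
      rw [two_mul, ← two_smul ℝ, inv_smul_smul₀ two_ne_zero]

theorem posDef_imaginaryPart_inverseCayley {w : Matrix n n ℂ} (hw : (1 - w * wᴴ).PosDef) :
    (ℑ (inverseCayley w) : Matrix n n ℂ).PosDef := by
  have hunit := isUnit_one_sub_of_posDef hw
  rw [coe_imaginaryPart_inverseCayley hunit]
  exact (IsUnit.posDef_star_right_conjugate_iff (isUnit_nonsing_inv_iff.mpr hunit)).mpr hw

end Cayley

section Siegel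

variable (n : Type*)

/-- The Siegel upper half space `SH`, the target of the inverse Cayley transformation. The real and
imaginary parts are taken entrywise, so the symmetry of `x` makes both of them symmetric. -/
def siegelUpperHalfSpace : Set (Matrix n n ℂ) :=
  {x | x.IsSymm ∧ (x.map Complex.im).PosDef}

variable [Fintype n] [DecidableEq n]

/-- The Siegel disk `SD`, on which the inverse Cayley transformation is defined. Symmetry here means
`wᵀ = w`, not `wᴴ = w`. -/
def siegelDisk : Set (Matrix n n ℂ) :=
  {w | w.IsSymm ∧ (1 - w * wᴴ).PosDef}

variable {n}

theorem inverseCayley_mem_siegelUpperHalfSpace {w : Matrix n n ℂ} (hw : w ∈ siegelDisk n) :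
    inverseCayley w ∈ siegelUpperHalfSpace n := by
  have hsymm := isSymm_inverseCayley hw.1
  refine ⟨hsymm, posDef_of_posDef_map_ofReal (𝕜 := ℂ) ?_⟩
  exact coe_imaginaryPart_of_isSymm hsymm ▸ posDef_imaginaryPart_inverseCayley hw.2

theorem inverse_cayley_maps_SD_to_SH_general {w : Matrix n n ℂ} (hw : wᵀ = w)
    (hwd : (1 - w * wᴴ).PosDef) :
    IsUnit (1 - w) ∧ (inverseCayley w)ᵀ = inverseCayley w ∧
      ∃ u v : Matrix n n ℝ, uᵀ = u ∧ v.PosDef ∧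
        inverseCayley w = u.map ((↑) : ℝ → ℂ) + Complex.I • v.map ((↑) : ℝ → ℂ) := by
  obtain ⟨hsymm, hpos⟩ := inverseCayley_mem_siegelUpperHalfSpace ⟨hw, hwd⟩
  exact ⟨isUnit_one_sub_of_posDef hwd, hsymm, _, _, hsymm.map Complex.re, hpos,
    (map_re_add_I_smul_map_im _).symm⟩

end Siegel

/-- the inverse matrix Cayley transformation maps the Siegel disk
into the Siegel upper half space. -/
theorem inverse_cayley_maps_SD_to_SH (m : ℕ) (hm : 1 ≤ m)
    (w : Matrix (Fin m) (Fin m) ℂ) (hw : wᵀ = w)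
    (hwd : ((1 : Matrix (Fin m) (Fin m) ℂ) - w * wᴴ).PosDef)
    (x : Matrix (Fin m) (Fin m) ℂ)
    (hx : x = Complex.I • (((1 : Matrix (Fin m) (Fin m) ℂ) + w) *
      ((1 : Matrix (Fin m) (Fin m) ℂ) - w)⁻¹)) :
    IsUnit ((1 : Matrix (Fin m) (Fin m) ℂ) - w) ∧
    xᵀ = x ∧
    ∃ u v : Matrix (Fin m) (Fin m) ℝ, uᵀ = u ∧ v.PosDef ∧
      x = u.map ((↑) : ℝ → ℂ) + Complex.I • v.map ((↑) : ℝ → ℂ) := by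
  exact hx ▸ inverse_cayley_maps_SD_to_SH_general hw hwd
end

section
/- Let m ≥ 1 and x = u + iv ∈ SH_m. Then φ(x)[iI_m] = x, i.e., the symplectic matrix φ(x) = [[v^{1/2}, u v^{-1/2}], [0, v^{-1/2}]] carries the base point iI_m to x under the Möbius action. Consequently, the action of Sp_{2m} on SH_m is transitive. -/
open Matrix

/-- Membership in the Siegel upper half space. -/
def inSH {m : ℕ} (x : Matrix (Fin m) (Fin m) ℂ) : Prop :=
  ∃ u v : Matrix (Fin m) (Fin m) ℝ, uᵀ = u ∧ v.PosDef ∧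
    x = u.map ((↑) : ℝ → ℂ) + Complex.I • v.map ((↑) : ℝ → ℂ)

/-- Membership in the real symplectic group Sp_{2m}, in block form. -/
def inSp {m : ℕ} (s : Matrix (Fin m ⊕ Fin m) (Fin m ⊕ Fin m) ℝ) : Prop :=
  s.toBlocks₁₁ * s.toBlocks₁₂ᵀ = s.toBlocks₁₂ * s.toBlocks₁₁ᵀ ∧
  s.toBlocks₂₁ * s.toBlocks₂₂ᵀ = s.toBlocks₂₂ * s.toBlocks₂₁ᵀ ∧
  s.toBlocks₁₁ * s.toBlocks₂₂ᵀ - s.toBlocks₁₂ * s.toBlocks₂₁ᵀ = 1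

/-- The symplectic Möbius action s[x] = (a x + b)(c x + d)⁻¹. -/
noncomputable def mobius {m : ℕ} (s : Matrix (Fin m ⊕ Fin m) (Fin m ⊕ Fin m) ℝ)
    (x : Matrix (Fin m) (Fin m) ℂ) : Matrix (Fin m) (Fin m) ℂ :=
  (s.toBlocks₁₁.map ((↑) : ℝ → ℂ) * x + s.toBlocks₁₂.map ((↑) : ℝ → ℂ)) *
  (s.toBlocks₂₁.map ((↑) : ℝ → ℂ) * x + s.toBlocks₂₂.map ((↑) : ℝ → ℂ))⁻¹

/-!
The Möbius action is multiplicative wherever the automorphy factor `c x + d` is invertible. Since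
`φ(x)` is symplectic, carries `iI` to `x`, and has the invertible factor `v^{-1/2}` at `iI`, the
symplectic matrix `φ(y) φ(x)⁻¹` carries `x = φ(x)[iI]` to `φ(y)[iI] = y`.
-/

open scoped MatrixOrder ComplexOrder in
theorem exists_posDef_mul_self_eq {n 𝕜 : Type*} [Fintype n] [RCLike 𝕜]
    {v : Matrix n n 𝕜} (hv : v.PosDef) : ∃ r : Matrix n n 𝕜, r.PosDef ∧ r * r = v := by
  classical
  exact ⟨CFC.sqrt v, hv.isStrictlyPositive.sqrt.posDef,
    CFC.sqrt_mul_sqrt_self v hv.posSemidef.nonneg⟩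

theorem map_ofReal_mul {l m n : Type*} [Fintype m] (a : Matrix l m ℝ) (b : Matrix m n ℝ) :
    (a * b).map ((↑) : ℝ → ℂ) = a.map ((↑) : ℝ → ℂ) * b.map ((↑) : ℝ → ℂ) :=
  Matrix.map_mul (f := Complex.ofRealHom)

theorem map_ofReal_add {m n : Type*} (a b : Matrix m n ℝ) :
    (a + b).map ((↑) : ℝ → ℂ) = a.map ((↑) : ℝ → ℂ) + b.map ((↑) : ℝ → ℂ) :=
  Matrix.map_add _ Complex.ofReal_add a b

theorem map_ofReal_inv_mul_map_ofReal {n : Type*} [Fintype n] [DecidableEq n]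
    {r : Matrix n n ℝ} (hr : IsUnit r) :
    r⁻¹.map ((↑) : ℝ → ℂ) * r.map ((↑) : ℝ → ℂ) = 1 := by
  rw [← map_ofReal_mul, nonsing_inv_mul r ((isUnit_iff_isUnit_det r).1 hr),
    Matrix.map_one _ Complex.ofReal_zero Complex.ofReal_one]

section Mobius

variable {m : ℕ}

/-- The numerator `a x + b` of the Möbius action. -/
noncomputable def mobiusNum (s : Matrix (Fin m ⊕ Fin m) (Fin m ⊕ Fin m) ℝ)
    (x : Matrix (Fin m) (Fin m) ℂ) : Matrix (Fin m) (Fin m) ℂ :=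
  s.toBlocks₁₁.map ((↑) : ℝ → ℂ) * x + s.toBlocks₁₂.map ((↑) : ℝ → ℂ)

/-- The denominator `c x + d` of the Möbius action, its automorphy factor. -/
noncomputable def mobiusDenom (s : Matrix (Fin m ⊕ Fin m) (Fin m ⊕ Fin m) ℝ)
    (x : Matrix (Fin m) (Fin m) ℂ) : Matrix (Fin m) (Fin m) ℂ :=
  s.toBlocks₂₁.map ((↑) : ℝ → ℂ) * x + s.toBlocks₂₂.map ((↑) : ℝ → ℂ)

theorem mobius_eq_num_mul_denom_inv (s : Matrix (Fin m ⊕ Fin m) (Fin m ⊕ Fin m) ℝ)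
    (x : Matrix (Fin m) (Fin m) ℂ) : mobius s x = mobiusNum s x * (mobiusDenom s x)⁻¹ :=
  rfl

variable (s : Matrix (Fin m ⊕ Fin m) (Fin m ⊕ Fin m) ℝ)
  {t : Matrix (Fin m ⊕ Fin m) (Fin m ⊕ Fin m) ℝ} {x : Matrix (Fin m) (Fin m) ℂ}

theorem mobius_mul_mobiusDenom (h : IsUnit (mobiusDenom t x)) :
    mobius t x * mobiusDenom t x = mobiusNum t x :=
  nonsing_inv_mul_cancel_right _ _ ((isUnit_iff_isUnit_det _).1 h)

theorem mobiusNum_mul (h : IsUnit (mobiusDenom t x)) :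
    mobiusNum (s * t) x = mobiusNum s (mobius t x) * mobiusDenom t x := by
  rw [mobiusNum.eq_def s, add_mul, mul_assoc, mobius_mul_mobiusDenom h,
    ← fromBlocks_toBlocks s, ← fromBlocks_toBlocks t, fromBlocks_multiply]
  simp only [mobiusNum, mobiusDenom, toBlocks_fromBlocks₁₁, toBlocks_fromBlocks₁₂,
    toBlocks_fromBlocks₂₁, toBlocks_fromBlocks₂₂, map_ofReal_add, map_ofReal_mul]
  noncomm_ring

theorem mobiusDenom_mul (h : IsUnit (mobiusDenom t x)) :
    mobiusDenom (s * t) x = mobiusDenom s (mobius t x) * mobiusDenom t x := by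
  rw [mobiusDenom.eq_def s, add_mul, mul_assoc, mobius_mul_mobiusDenom h,
    ← fromBlocks_toBlocks s, ← fromBlocks_toBlocks t, fromBlocks_multiply]
  simp only [mobiusNum, mobiusDenom, toBlocks_fromBlocks₁₁, toBlocks_fromBlocks₁₂,
    toBlocks_fromBlocks₂₁, toBlocks_fromBlocks₂₂, map_ofReal_add, map_ofReal_mul]
  noncomm_ring

theorem mobius_mul (h : IsUnit (mobiusDenom t x)) :
    mobius (s * t) x = mobius s (mobius t x) := by
  rw [mobius_eq_num_mul_denom_inv, mobiusNum_mul s h, mobiusDenom_mul s h, Matrix.mul_inv_rev,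
    mul_assoc, mul_nonsing_inv_cancel_left _ _ ((isUnit_iff_isUnit_det _).1 h),
    ← mobius_eq_num_mul_denom_inv]

theorem inSp_iff_mem_symplecticGroup : inSp s ↔ s ∈ symplecticGroup (Fin m) ℝ := by
  rw [← SymplecticGroup.transpose_mem_iff, ← fromBlocks_toBlocks s, fromBlocks_transpose,
    SymplecticGroup.fromBlocks_mem_iff]
  simp only [inSp, fromBlocks_toBlocks, transpose_transpose]

end Mobius

section Phi

variable {m : ℕ}

/-- The matrix `φ(u + iv)` carrying `iI` to `u + iv`, encoded by the real part `u` and a square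
root `r` of the imaginary part `v`; symplectic when `u` and the invertible `r` are symmetric. -/
noncomputable def phi (u r : Matrix (Fin m) (Fin m) ℝ) :
    Matrix (Fin m ⊕ Fin m) (Fin m ⊕ Fin m) ℝ :=
  fromBlocks r (u * r⁻¹) 0 r⁻¹

variable {u r : Matrix (Fin m) (Fin m) ℝ}

theorem phi_mem_symplecticGroup (hu : uᵀ = u) (hrt : rᵀ = r) (hr : IsUnit r) :
    phi u r ∈ symplecticGroup (Fin m) ℝ := by
  have hdet : IsUnit r.det := (isUnit_iff_isUnit_det r).1 hr
  rw [phi, SymplecticGroup.fromBlocks_mem_iff]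
  simp only [transpose_mul, transpose_nonsing_inv, transpose_zero, hu, hrt, mul_zero, zero_mul,
    sub_zero, mul_assoc, mul_nonsing_inv r hdet, and_self]

variable (u)

theorem mobiusNum_phi (r : Matrix (Fin m) (Fin m) ℝ) (x : Matrix (Fin m) (Fin m) ℂ) :
    mobiusNum (phi u r) x = r.map ((↑) : ℝ → ℂ) * x + (u * r⁻¹).map ((↑) : ℝ → ℂ) := by
  simp only [mobiusNum, phi, toBlocks_fromBlocks₁₁, toBlocks_fromBlocks₁₂]

theorem mobiusDenom_phi (r : Matrix (Fin m) (Fin m) ℝ) (x : Matrix (Fin m) (Fin m) ℂ) :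
    mobiusDenom (phi u r) x = r⁻¹.map ((↑) : ℝ → ℂ) := by
  simp only [mobiusDenom, phi, toBlocks_fromBlocks₂₁, toBlocks_fromBlocks₂₂,
    Matrix.map_zero _ Complex.ofReal_zero, zero_mul, zero_add]

theorem isUnit_mobiusDenom_phi (hr : IsUnit r) (x : Matrix (Fin m) (Fin m) ℂ) :
    IsUnit (mobiusDenom (phi u r) x) := by
  rw [mobiusDenom_phi]
  exact IsUnit.of_mul_eq_one _ (map_ofReal_inv_mul_map_ofReal hr)

theorem mobius_phi (hr : IsUnit r) (x : Matrix (Fin m) (Fin m) ℂ) :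
    mobius (phi u r) x =
      r.map ((↑) : ℝ → ℂ) * x * r.map ((↑) : ℝ → ℂ) + u.map ((↑) : ℝ → ℂ) := by
  have hinv := map_ofReal_inv_mul_map_ofReal hr
  rw [mobius_eq_num_mul_denom_inv, mobiusNum_phi, mobiusDenom_phi, inv_eq_right_inv hinv, add_mul,
    map_ofReal_mul, mul_assoc (u.map _), hinv, mul_one]

theorem mobius_phi_I (hr : IsUnit r) :
    mobius (phi u r) (Complex.I • (1 : Matrix (Fin m) (Fin m) ℂ)) =
      u.map ((↑) : ℝ → ℂ) + Complex.I • (r * r).map ((↑) : ℝ → ℂ) := by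
  rw [mobius_phi u hr, Matrix.mul_smul, mul_one, Matrix.smul_mul, ← map_ofReal_mul, add_comm]

end Phi

section Transitivity

variable {m : ℕ} {x y : Matrix (Fin m) (Fin m) ℂ}

theorem inSH.exists_phi (hx : inSH x) :
    ∃ u r : Matrix (Fin m) (Fin m) ℝ, IsUnit r ∧ phi u r ∈ symplecticGroup (Fin m) ℝ ∧
      mobius (phi u r) (Complex.I • 1) = x := by
  obtain ⟨u, v, hu, hv, rfl⟩ := hx
  obtain ⟨r, hr, rfl⟩ := exists_posDef_mul_self_eq hv
  have hrt : rᵀ = r := by rw [← conjTranspose_eq_transpose_of_trivial r, hr.isHermitian.eq]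
  exact ⟨u, r, hr.isUnit, phi_mem_symplecticGroup hu hrt hr.isUnit, mobius_phi_I u hr.isUnit⟩

theorem exists_inSp_mobius_eq (hx : inSH x) (hy : inSH y) :
    ∃ s : Matrix (Fin m ⊕ Fin m) (Fin m ⊕ Fin m) ℝ, inSp s ∧ mobius s x = y := by
  obtain ⟨u, r, hr, hS, rfl⟩ := hx.exists_phi
  obtain ⟨u', r', -, hT, rfl⟩ := hy.exists_phi
  let S : symplecticGroup (Fin m) ℝ := ⟨phi u r, hS⟩
  let T : symplecticGroup (Fin m) ℝ := ⟨phi u' r', hT⟩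
  refine ⟨↑(T * S⁻¹), (inSp_iff_mem_symplecticGroup _).2 (T * S⁻¹).2, ?_⟩
  have hTS : (↑(T * S⁻¹) : Matrix _ _ ℝ) * phi u r = phi u' r' :=
    congrArg Subtype.val (inv_mul_cancel_right T S)
  rw [← mobius_mul _ (isUnit_mobiusDenom_phi u hr _), hTS]

end Transitivity

theorem phi_carries_basepoint_and_transitive_general (m : ℕ)
    (u r : Matrix (Fin m) (Fin m) ℝ) (hr : IsUnit r) :
    mobius (Matrix.fromBlocks r (u * r⁻¹) 0 r⁻¹)
        (Complex.I • (1 : Matrix (Fin m) (Fin m) ℂ))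
      = u.map ((↑) : ℝ → ℂ) + Complex.I • (r * r).map ((↑) : ℝ → ℂ) ∧
    (∀ x y : Matrix (Fin m) (Fin m) ℂ, inSH x → inSH y →
      ∃ s : Matrix (Fin m ⊕ Fin m) (Fin m ⊕ Fin m) ℝ, inSp s ∧ mobius s x = y) :=
  ⟨mobius_phi_I u hr, fun _ _ => exists_inSp_mobius_eq⟩

/-- φ(x) carries the base point iI_m to x = u + iv under the
Möbius action; consequently the action of Sp_{2m} on SH_m is transitive. -/
theorem phi_carries_basepoint_and_transitive (m : ℕ) (hm : 1 ≤ m)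
    (u v : Matrix (Fin m) (Fin m) ℝ) (hu : uᵀ = u) (hv : v.PosDef)
    (r : Matrix (Fin m) (Fin m) ℝ) (hr : r.PosDef ∧ r * r = v) :
    mobius (Matrix.fromBlocks r (u * r⁻¹) 0 r⁻¹)
        (Complex.I • (1 : Matrix (Fin m) (Fin m) ℂ))
      = u.map ((↑) : ℝ → ℂ) + Complex.I • v.map ((↑) : ℝ → ℂ) ∧
    (∀ x y : Matrix (Fin m) (Fin m) ℂ, inSH x → inSH y →
      ∃ s : Matrix (Fin m ⊕ Fin m) (Fin m ⊕ Fin m) ℝ, inSp s ∧ mobius s x = y) := by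
  obtain ⟨hr, rfl⟩ := hr
  exact phi_carries_basepoint_and_transitive_general m u r hr.isUnit
end

section
/- Let m ≥ 1 and let x, y ∈ SH_m. Then the complex matrices x − ȳ and x̄ − y are invertible, and every eigenvalue (root of the characteristic polynomial over ℂ, with multiplicity) of the cross-ratio matrix R(x,y) = (x−y)(x−ȳ)^{-1}(x̄−ȳ)(x̄−y)^{-1} is a real number r with 0 ≤ r < 1. -/
open Matrix

/-- Entrywise complex conjugate of a complex matrix. -/
def conjM {m : ℕ} (x : Matrix (Fin m) (Fin m) ℂ) : Matrix (Fin m) (Fin m) ℂ :=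
  x.map (starRingEnd ℂ)

/-- The cross-ratio R(x,y) = (x−y)(x−ȳ)⁻¹(x̄−ȳ)(x̄−y)⁻¹. -/
noncomputable def crossRatio {m : ℕ} (x y : Matrix (Fin m) (Fin m) ℂ) :
    Matrix (Fin m) (Fin m) ℂ :=
  (x - y) * (x - conjM y)⁻¹ * (conjM x - conjM y) * (conjM x - y)⁻¹

open scoped ComplexStarModule Ring

/-!
Complex conjugation of a symmetric matrix is its adjoint, so the Siegel upper half space lies in the
operator upper half plane of all `x` whose imaginary part `ℑ x` is strictly positive, and there the
argument works in any C⋆-algebra. Put `a = x - y⋆` and `b = x - y`, so that the cross-ratio is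
`R = b a⁻¹ b⋆ a⋆⁻¹`. Since `b = a - 2i ℑ y` and `b⋆ = a - 2i ℑ x`, one finds
`R = ℑ y · (c (ℑ y)⁻¹ c⋆)` with `c = a⁻¹ b`, and `1 - R = ℑ y · (4 a⁻¹ (ℑ x) a⋆⁻¹)`. Both are
products `p q` of two nonnegative elements, and such a product has nonnegative spectrum because,
up to the point `0`, it has the same spectrum as `√p q √p`. The product `1 - R` is moreover
invertible.
-/

/-- The cross-ratio of two elements of a star ring: the matrix cross-ratio with complex conjugates
replaced by adjoints. The two agree on symmetric matrices. Inverses are `Ring.inverse`, which is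
zero on non-units. -/
noncomputable def starCrossRatio {A : Type*} [Ring A] [Star A] (x y : A) : A :=
  (x - y) * (x - star y)⁻¹ʳ * (star x - star y) * (star x - y)⁻¹ʳ

lemma starCrossRatio_eq {A : Type*} [Ring A] [StarRing A] (x y : A) :
    starCrossRatio x y =
      (x - y) * (x - star y)⁻¹ʳ * star (x - y) * star (x - star y)⁻¹ʳ := by
  rw [starCrossRatio, ← Ring.inverse_star, star_sub, star_sub, star_star]

section ImaginaryPart

variable {E : Type*} [AddCommGroup E] [Module ℂ E] [StarAddMonoid E] [StarModule ℂ E]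

lemma imaginaryPart_star (x : E) : ℑ (star x) = -ℑ x := by
  ext
  simp only [imaginaryPart_apply_coe, AddSubgroup.coe_neg, star_star, ← smul_neg, neg_sub]

lemma imaginaryPart_sub_star (x y : E) : (ℑ (x - star y) : E) = ℑ x + ℑ y := by
  rw [map_sub, imaginaryPart_star, sub_neg_eq_add, AddSubgroup.coe_add]

lemma imaginaryPart_add_I_smul_s9 {h k : E} (hh : IsSelfAdjoint h) (hk : IsSelfAdjoint k) :
    (ℑ (h + Complex.I • k) : E) = k := by
  rw [map_add, hh.imaginaryPart, zero_add, imaginaryPart_I_smul, hk.coe_realPart]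

lemma self_sub_star (x : E) : x - star x = (2 * Complex.I) • (ℑ x : E) := by
  rw [mul_smul, ← skewAdjointPart_eq_I_smul_imaginaryPart, skewAdjointPart_apply_coe,
    ← Complex.coe_smul, smul_smul]
  norm_num

lemma sub_eq_sub_star_sub (x y : E) :
    x - y = (x - star y) - (2 * Complex.I) • (ℑ y : E) := by
  rw [← self_sub_star, sub_sub_sub_cancel_right]

lemma star_sub_eq_sub_star_sub (x y : E) :
    star (x - y) = (x - star y) - (2 * Complex.I) • (ℑ x : E) := by
  rw [← self_sub_star, sub_sub_sub_cancel_left, star_sub]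

end ImaginaryPart

section Algebra

variable {R A : Type*} [CommRing R] [Ring A] [Algebra R A] {a : A}

lemma sub_smul_mul_inverse_mul (t : R) (q : A) (ha : IsUnit a) :
    (a - t • q) * a⁻¹ʳ * q = q * (a⁻¹ʳ * (a - t • q)) := by
  simp only [sub_mul, mul_sub, smul_mul_assoc, mul_smul_comm, mul_assoc,
    Ring.mul_inverse_cancel a ha, Ring.inverse_mul_cancel a ha, one_mul, mul_one]

lemma sub_smul_mul_inverse_mul_sub_smul (t : R) (p q : A) (ha : IsUnit a) :
    (a - t • q) * a⁻¹ʳ * (a - t • p) = a - t • (p + q) + t ^ 2 • (q * a⁻¹ʳ * p) := by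
  simp only [sub_mul, mul_sub, smul_mul_assoc, mul_smul_comm, one_mul,
    Ring.mul_inverse_cancel a ha, Ring.inverse_mul_cancel_right _ _ ha]
  module

end Algebra

section StarAlgebra

variable {A : Type*} [Ring A] [StarRing A] [Algebra ℂ A] [StarModule ℂ A] {x y : A}

lemma sub_mul_inverse_mul_imaginaryPart (h : IsUnit (x - star y)) :
    (x - y) * (x - star y)⁻¹ʳ * ℑ y = ℑ y * ((x - star y)⁻¹ʳ * (x - y)) := by
  rw [sub_eq_sub_star_sub, sub_smul_mul_inverse_mul _ _ h]

lemma starCrossRatio_eq_imaginaryPart_mul (h : IsUnit (x - star y)) (hy : IsUnit (ℑ y : A)) :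
    starCrossRatio x y =
      ℑ y * ((x - star y)⁻¹ʳ * (x - y) * (ℑ y : A)⁻¹ʳ * star ((x - star y)⁻¹ʳ * (x - y))) := by
  rw [← mul_assoc, ← mul_assoc, ← sub_mul_inverse_mul_imaginaryPart h,
    Ring.mul_inverse_cancel_right _ _ hy, star_mul, ← mul_assoc, starCrossRatio_eq]

lemma star_sub_star_sub_mul_inverse_mul_star (h : IsUnit (x - star y)) :
    star (x - star y) - (x - y) * (x - star y)⁻¹ʳ * star (x - y) =
      (4 : ℂ) • (ℑ y * (x - star y)⁻¹ʳ * ℑ x) := by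
  have hstar : star (x - star y) = (x - star y) - (2 * Complex.I) • ((ℑ x : A) + ℑ y) := by
    rw [← imaginaryPart_sub_star, ← self_sub_star, sub_sub_cancel]
  rw [star_sub_eq_sub_star_sub x y, sub_eq_sub_star_sub x y,
    sub_smul_mul_inverse_mul_sub_smul _ _ _ h, hstar, sub_add_cancel_left, ← neg_smul, mul_pow,
    Complex.I_sq]
  norm_num

lemma one_sub_starCrossRatio (h : IsUnit (x - star y)) :
    1 - starCrossRatio x y =
      ℑ y * ((4 : ℂ) • ((x - star y)⁻¹ʳ * ℑ x * star (x - star y)⁻¹ʳ)) := by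
  have hone : star (x - star y) * star (x - star y)⁻¹ʳ = 1 := by
    rw [← star_mul, Ring.inverse_mul_cancel _ h, star_one]
  rw [starCrossRatio_eq, ← hone, ← sub_mul, star_sub_star_sub_mul_inverse_mul_star h]
  simp only [smul_mul_assoc, mul_smul_comm, mul_assoc]

end StarAlgebra

section CStarAlgebra

open scoped ComplexOrder

variable {A : Type*} [CStarAlgebra A] {a b x y : A} {z : ℂ}

lemma isUnit_add_algebraMap_I (ha : IsSelfAdjoint a) : IsUnit (a + algebraMap ℂ A Complex.I) := by
  by_contra h
  have hI : -Complex.I ∈ spectrum ℂ a := by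
    rwa [spectrum.mem_iff, ← IsUnit.neg_iff, neg_sub, map_neg, sub_neg_eq_add]
  simpa using ha.im_eq_zero_of_mem_spectrum hI

variable [PartialOrder A] [StarOrderedRing A]

-- Conjugating by `s = (ℑ a)^(-1/2)` turns `a` into a selfadjoint element plus `i`.
lemma isUnit_of_isStrictlyPositive_imaginaryPart (ha : IsStrictlyPositive (ℑ a : A)) :
    IsUnit a := by
  let s := CFC.sqrt (ℑ a : A)⁻¹ʳ
  have hs : IsUnit s := ha.ringInverse.isUnit_cfcSqrt
  have hs_star : star s = s := (CFC.sqrt_nonneg _).isSelfAdjoint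
  have hs_one : s * ℑ a * s = 1 := CFC.conjSqrt_ringInverse_self _ ha
  have hsas : s * a * s = s * ℜ a * s + algebraMap ℂ A Complex.I := by
    nth_rewrite 1 [← realPart_add_I_smul_imaginaryPart a]
    rw [mul_add, add_mul, mul_smul_comm, smul_mul_assoc, hs_one, Algebra.algebraMap_eq_smul_one]
  have hre : IsSelfAdjoint (s * ℜ a * s) := by
    simpa only [hs_star] using (ℜ a).2.conjugate s
  have hunit : IsUnit (s * a * s) := hsas ▸ isUnit_add_algebraMap_I hre
  rwa [hs.mul_right_iff, hs.mul_left_iff] at hunit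

lemma nonneg_of_mem_spectrum_mul (ha : 0 ≤ a) (hb : 0 ≤ b) (hz : z ∈ spectrum ℂ (a * b)) :
    0 ≤ z := by
  have hz' : z ∈ quasispectrum ℂ (CFC.sqrt a * b * CFC.sqrt a) := by
    rw [← quasispectrum.mul_comm, ← mul_assoc, CFC.sqrt_mul_sqrt_self a]
    exact spectrum_subset_quasispectrum ℂ _ hz
  exact quasispectrum_nonneg_of_nonneg _ (conjugate_nonneg_of_nonneg hb (CFC.sqrt_nonneg a)) _ hz'

lemma pos_of_mem_spectrum_mul (ha : IsStrictlyPositive a) (hb : IsStrictlyPositive b)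
    (hz : z ∈ spectrum ℂ (a * b)) : 0 < z :=
  (nonneg_of_mem_spectrum_mul ha.nonneg hb.nonneg hz).lt_of_ne' <|
    spectrum.ne_zero_of_mem_of_unit (a := (ha.isUnit.mul hb.isUnit).unit) hz

lemma isUnit_sub_star (hx : IsStrictlyPositive (ℑ x : A)) (hy : IsStrictlyPositive (ℑ y : A)) :
    IsUnit (x - star y) := by
  apply isUnit_of_isStrictlyPositive_imaginaryPart
  rw [imaginaryPart_sub_star]
  exact hx.add_nonneg hy.nonneg

lemma nonneg_of_mem_spectrum_starCrossRatio (hx : IsStrictlyPositive (ℑ x : A))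
    (hy : IsStrictlyPositive (ℑ y : A)) (hz : z ∈ spectrum ℂ (starCrossRatio x y)) : 0 ≤ z := by
  rw [starCrossRatio_eq_imaginaryPart_mul (isUnit_sub_star hx hy) hy.isUnit] at hz
  exact nonneg_of_mem_spectrum_mul hy.nonneg
    (star_right_conjugate_nonneg hy.ringInverse.nonneg _) hz

lemma lt_one_of_mem_spectrum_starCrossRatio (hx : IsStrictlyPositive (ℑ x : A))
    (hy : IsStrictlyPositive (ℑ y : A)) (hz : z ∈ spectrum ℂ (starCrossRatio x y)) : z < 1 := by
  have hunit := isUnit_sub_star hx hy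
  have hz' : 1 - z ∈ spectrum ℂ (1 - starCrossRatio x y) := by
    rw [← map_one (algebraMap ℂ A), ← spectrum.singleton_sub_eq]
    exact Set.sub_mem_sub rfl hz
  rw [one_sub_starCrossRatio hunit] at hz'
  have hpos : IsStrictlyPositive ((x - star y)⁻¹ʳ * ℑ x * star (x - star y)⁻¹ʳ) :=
    hunit.ringInverse.isStrictlyPositive_star_right_conjugate_iff.2 hx
  exact sub_pos.1 (pos_of_mem_spectrum_mul hy (hpos.smul (by norm_num)) hz')

theorem crossRatio_eigenvalues_in_unit_interval_general
    (hx : IsStrictlyPositive (ℑ x : A)) (hy : IsStrictlyPositive (ℑ y : A)) :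
    IsUnit (x - star y) ∧ IsUnit (star x - y) ∧
      ∀ z ∈ spectrum ℂ (starCrossRatio x y), ∃ r : ℝ, z = (r : ℂ) ∧ 0 ≤ r ∧ r < 1 := by
  refine ⟨isUnit_sub_star hx hy, ?_, fun z hz ↦ ?_⟩
  · simpa only [star_sub, star_star] using (isUnit_sub_star hx hy).star
  · have h0 := nonneg_of_mem_spectrum_starCrossRatio hx hy hz
    have h1 := lt_one_of_mem_spectrum_starCrossRatio hx hy hz
    exact ⟨z.re, Complex.eq_re_of_ofReal_le h0,
      (Complex.nonneg_iff.1 h0).1, (Complex.lt_def.1 h1).1⟩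

end CStarAlgebra

section SiegelUpperHalfSpace

open scoped ComplexOrder MatrixOrder Matrix.Norms.L2Operator

lemma conjM_eq_star {m : ℕ} {x : Matrix (Fin m) (Fin m) ℂ} (hx : x.IsSymm) : conjM x = star x := by
  rw [star_eq_conjTranspose, conjTranspose, hx.eq]
  rfl

lemma crossRatio_eq_starCrossRatio {m : ℕ} {x y : Matrix (Fin m) (Fin m) ℂ}
    (hx : x.IsSymm) (hy : y.IsSymm) : crossRatio x y = starCrossRatio x y := by
  simp only [crossRatio, starCrossRatio, conjM_eq_star hx, conjM_eq_star hy,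
    nonsing_inv_eq_ringInverse]

variable {n : Type*} {u v : Matrix n n ℝ}

lemma isSymm_map_ofReal_add_I_smul (hu : u.IsSymm) (hv : v.IsSymm) :
    (u.map ((↑) : ℝ → ℂ) + Complex.I • v.map ((↑) : ℝ → ℂ)).IsSymm :=
  (hu.map _).add ((hv.map _).smul _)

lemma isHermitian_map_ofReal (hu : u.IsSymm) : (u.map ((↑) : ℝ → ℂ)).IsHermitian :=
  (isHermitian_iff_isSymm.2 hu).map _ fun r ↦ (Complex.conj_ofReal r).symm

lemma posSemidef_map_ofReal [Finite n] (hv : v.PosSemidef) : (v.map ((↑) : ℝ → ℂ)).PosSemidef := by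
  classical
  have := Fintype.ofFinite n
  obtain ⟨B, rfl⟩ := CStarAlgebra.nonneg_iff_eq_star_mul_self.mp hv.nonneg
  have hB : (star B * B).map ((↑) : ℝ → ℂ) = (B.map (↑))ᴴ * B.map (↑) := by
    ext; simp [mul_apply]
  exact hB ▸ posSemidef_conjTranspose_mul_self _

variable [Fintype n] [DecidableEq n]

lemma isStrictlyPositive_map_ofReal (hv : v.PosDef) :
    IsStrictlyPositive (v.map ((↑) : ℝ → ℂ)) :=
  (hv.isUnit.map Complex.ofRealHom.mapMatrix).isStrictlyPositive
    (posSemidef_map_ofReal hv.posSemidef).nonneg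

lemma isStrictlyPositive_imaginaryPart_map_ofReal_add_I_smul (hu : u.IsSymm) (hv : v.PosDef) :
    IsStrictlyPositive
      (ℑ (u.map ((↑) : ℝ → ℂ) + Complex.I • v.map ((↑) : ℝ → ℂ)) : Matrix n n ℂ) := by
  have hV := isStrictlyPositive_map_ofReal hv
  rw [imaginaryPart_add_I_smul_s9 (isHermitian_map_ofReal hu) hV.isSelfAdjoint]
  exact hV

end SiegelUpperHalfSpace

/-- for x, y in the Siegel upper half space, x − ȳ and x̄ − y are
invertible, and every eigenvalue of the cross-ratio R(x,y) is a real number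
in [0,1). -/
theorem crossRatio_eigenvalues_in_unit_interval (m : ℕ) (hm : 1 ≤ m)
    (u v u' v' : Matrix (Fin m) (Fin m) ℝ)
    (hu : uᵀ = u) (hv : v.PosDef) (hu' : u'ᵀ = u') (hv' : v'.PosDef)
    (x y : Matrix (Fin m) (Fin m) ℂ)
    (hx : x = u.map ((↑) : ℝ → ℂ) + Complex.I • v.map ((↑) : ℝ → ℂ))
    (hy : y = u'.map ((↑) : ℝ → ℂ) + Complex.I • v'.map ((↑) : ℝ → ℂ)) :
    IsUnit (x - conjM y) ∧ IsUnit (conjM x - y) ∧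
    ∀ z ∈ (crossRatio x y).charpoly.roots,
      ∃ r : ℝ, z = (r : ℂ) ∧ 0 ≤ r ∧ r < 1 := by
  have hxs : x.IsSymm := hx ▸ isSymm_map_ofReal_add_I_smul hu (isHermitian_iff_isSymm.1 hv.1)
  have hys : y.IsSymm := hy ▸ isSymm_map_ofReal_add_I_smul hu' (isHermitian_iff_isSymm.1 hv'.1)
  rw [conjM_eq_star hxs, conjM_eq_star hys, crossRatio_eq_starCrossRatio hxs hys]
  open scoped MatrixOrder Matrix.Norms.L2Operator in
  obtain ⟨hxy, hxy', hspec⟩ := crossRatio_eigenvalues_in_unit_interval_general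
    (hx ▸ isStrictlyPositive_imaginaryPart_map_ofReal_add_I_smul hu hv)
    (hy ▸ isStrictlyPositive_imaginaryPart_map_ofReal_add_I_smul hu' hv')
  exact ⟨hxy, hxy', fun z hz ↦
    hspec z (mem_spectrum_of_isRoot_charpoly (Polynomial.isRoot_of_mem_roots hz))⟩
end

section
/- Let m ≥ 1, s ∈ Sp_{2m} and x, y ∈ SH_m. Then the characteristic polynomials of the cross-ratio matrices R(s[x], s[y]) and R(x, y) coincide; consequently the Siegel distance is invariant under the symplectic Möbius action: d_SH(s[x], s[y]) = d_SH(x, y). -/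
open Matrix

/-- The Siegel distance, computed from the (real) eigenvalues of the
cross-ratio. -/
noncomputable def dSH {m : ℕ} (x y : Matrix (Fin m) (Fin m) ℂ) : ℝ :=
  Real.sqrt ((((crossRatio x y).charpoly.roots).map (fun z =>
    (Real.log ((1 + Real.sqrt z.re) / (1 - Real.sqrt z.re))) ^ 2)).sum)

/-!
Put `g = [[a, b], [c, d]]`, so that `g[z] = (a z + b)(c z + d)⁻¹`. Eliminating `b` and `d` with
`g[w] (c w + d) = a w + b` gives
`g[z] - g[w] = (a - g[w] c) (z - w) (c z + d)⁻¹`.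
In a cross-ratio of four points the right factors cancel, and the left factors cancel except for
one at `w`, which conjugates the cross-ratio. That factor is a Schur complement, hence invertible
as soon as `g` and `c w + d` are.

For real symplectic `g` the denominator `c x + d` is invertible on the upper half space: `g`
preserves the skew-Hermitian form given by `J`, and evaluating that form on the columns of `[x; 1]`
yields
`(c x + d)ᴴ (a x + b) - (a x + b)ᴴ (c x + d) = x - xᴴ`.
A kernel vector of `c x + d` is therefore isotropic for the positive definite imaginary part of `x`.
-/

namespace Siegel

section CommRing

variable {n R S : Type*} [Fintype n] [CommRing R] [CommRing S]

/-- The numerator `a z + b` of the fractional linear action of `[[a, b], [c, d]]`. -/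
def num (g : Matrix (n ⊕ n) (n ⊕ n) R) (z : Matrix n n R) : Matrix n n R :=
  g.toBlocks₁₁ * z + g.toBlocks₁₂

/-- The denominator `c z + d` of the fractional linear action of `[[a, b], [c, d]]`. -/
def denom (g : Matrix (n ⊕ n) (n ⊕ n) R) (z : Matrix n n R) : Matrix n n R :=
  g.toBlocks₂₁ * z + g.toBlocks₂₂

lemma num_map (f : R →+* S) (g : Matrix (n ⊕ n) (n ⊕ n) R) (z : Matrix n n R) :
    num (g.map f) (z.map f) = (num g z).map f := by
  rw [num, num, Matrix.map_add f (map_add f), Matrix.map_mul]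
  rfl

lemma denom_map (f : R →+* S) (g : Matrix (n ⊕ n) (n ⊕ n) R) (z : Matrix n n R) :
    denom (g.map f) (z.map f) = (denom g z).map f := by
  rw [denom, denom, Matrix.map_add f (map_add f), Matrix.map_mul]
  rfl

variable [DecidableEq n]

/-- The fractional linear action `g[z] = (a z + b)(c z + d)⁻¹` of `g = [[a, b], [c, d]]`, over any
commutative ring. It is meaningful only where `denom g z` is a unit. -/
noncomputable def fracLinear (g : Matrix (n ⊕ n) (n ⊕ n) R) (z : Matrix n n R) : Matrix n n R :=
  num g z * (denom g z)⁻¹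

/-- The factor `a - g[w] c` that a fractional linear map puts on the left of a difference
`z - w`; see `fracLinear_sub_fracLinear`. For symplectic `g` and symmetric `w` it is the inverse
transpose of `denom g w`. -/
noncomputable def leftFactor (g : Matrix (n ⊕ n) (n ⊕ n) R) (w : Matrix n n R) : Matrix n n R :=
  g.toBlocks₁₁ - fracLinear g w * g.toBlocks₂₁

/-- The cross-ratio `(z - w)(z - w')⁻¹(z' - w')(z' - w)⁻¹` of four matrices. It specializes to
`crossRatio z w` at `z' = conjM z`, `w' = conjM w`. -/
noncomputable def fourPointCrossRatio (z w z' w' : Matrix n n R) : Matrix n n R :=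
  (z - w) * (z - w')⁻¹ * (z' - w') * (z' - w)⁻¹

variable {g : Matrix (n ⊕ n) (n ⊕ n) R} {z w z' w' : Matrix n n R}

lemma fracLinear_mul_denom (hw : IsUnit (denom g w)) : fracLinear g w * denom g w = num g w :=
  nonsing_inv_mul_cancel_right _ _ ((isUnit_iff_isUnit_det _).mp hw)

lemma num_sub_fracLinear_mul_denom (hw : IsUnit (denom g w)) :
    num g z - fracLinear g w * denom g z = leftFactor g w * (z - w) := by
  calc num g z - fracLinear g w * denom g z
      = leftFactor g w * (z - w) + (num g w - fracLinear g w * denom g w) := by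
        simp only [num, denom, leftFactor]
        noncomm_ring
    _ = leftFactor g w * (z - w) := by
        rw [fracLinear_mul_denom hw, sub_self, add_zero]

lemma fracLinear_sub_fracLinear (hz : IsUnit (denom g z)) (hw : IsUnit (denom g w)) :
    fracLinear g z - fracLinear g w = leftFactor g w * (z - w) * (denom g z)⁻¹ := by
  rw [← num_sub_fracLinear_mul_denom hw, sub_mul,
    mul_nonsing_inv_cancel_right _ _ ((isUnit_iff_isUnit_det _).mp hz), fracLinear]

lemma det_leftFactor_mul_det_denom (hw : IsUnit (denom g w)) :
    (leftFactor g w).det * (denom g w).det = g.det := by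
  have factorization : fromBlocks 1 (-fracLinear g w) 0 1 * g * fromBlocks 1 w 0 1 =
      fromBlocks (leftFactor g w) 0 g.toBlocks₂₁ (denom g w) := by
    calc fromBlocks 1 (-fracLinear g w) 0 1 * g * fromBlocks 1 w 0 1
        = fromBlocks 1 (-fracLinear g w) 0 1 *
            fromBlocks g.toBlocks₁₁ g.toBlocks₁₂ g.toBlocks₂₁ g.toBlocks₂₂ *
            fromBlocks 1 w 0 1 := by rw [fromBlocks_toBlocks]
      _ = fromBlocks (leftFactor g w) (num g w - fracLinear g w * denom g w)
            g.toBlocks₂₁ (denom g w) := by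
        simp only [fromBlocks_multiply, leftFactor, num, denom]
        congr 1 <;> noncomm_ring
      _ = fromBlocks (leftFactor g w) 0 g.toBlocks₂₁ (denom g w) := by
        rw [fracLinear_mul_denom hw, sub_self]
  simpa [det_fromBlocks_zero₁₂, det_fromBlocks_zero₂₁] using (congrArg det factorization).symm

lemma isUnit_leftFactor (hg : IsUnit g) (hw : IsUnit (denom g w)) : IsUnit (leftFactor g w) := by
  rw [isUnit_iff_isUnit_det] at hg ⊢
  rw [← det_leftFactor_mul_det_denom hw] at hg
  exact isUnit_of_mul_isUnit_left hg

theorem fourPointCrossRatio_fracLinear (hg : IsUnit g)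
    (hz : IsUnit (denom g z)) (hw : IsUnit (denom g w))
    (hz' : IsUnit (denom g z')) (hw' : IsUnit (denom g w')) :
    fourPointCrossRatio (fracLinear g z) (fracLinear g w) (fracLinear g z') (fracLinear g w') =
      leftFactor g w * fourPointCrossRatio z w z' w' * (leftFactor g w)⁻¹ := by
  have hl' := isUnit_leftFactor hg hw'
  simp only [fourPointCrossRatio, fracLinear_sub_fracLinear hz hw, fracLinear_sub_fracLinear hz hw',
    fracLinear_sub_fracLinear hz' hw, fracLinear_sub_fracLinear hz' hw']
  rw [isUnit_iff_isUnit_det] at hz hz' hl'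
  simp only [Matrix.mul_inv_rev, nonsing_inv_nonsing_inv _ hz, nonsing_inv_nonsing_inv _ hz',
    mul_assoc, nonsing_inv_mul_cancel_left _ _ hz, nonsing_inv_mul_cancel_left _ _ hz',
    nonsing_inv_mul_cancel_left _ _ hl']

theorem charpoly_fourPointCrossRatio_fracLinear (hg : IsUnit g)
    (hz : IsUnit (denom g z)) (hw : IsUnit (denom g w))
    (hz' : IsUnit (denom g z')) (hw' : IsUnit (denom g w')) :
    (fourPointCrossRatio (fracLinear g z) (fracLinear g w)
      (fracLinear g z') (fracLinear g w')).charpoly = (fourPointCrossRatio z w z' w').charpoly := by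
  rw [fourPointCrossRatio_fracLinear hg hz hw hz' hw']
  exact charpoly_units_conj (isUnit_leftFactor hg hw).unit _

lemma nonsing_inv_map (f : R →+* S) {A : Matrix n n R} (hA : IsUnit A) :
    (A.map f)⁻¹ = A⁻¹.map f := by
  refine inv_eq_right_inv ?_
  rw [← Matrix.map_mul, mul_nonsing_inv A ((isUnit_iff_isUnit_det A).mp hA),
    Matrix.map_one f (map_zero f) (map_one f)]

lemma isUnit_denom_map (f : R →+* S) (hz : IsUnit (denom g z)) :
    IsUnit (denom (g.map f) (z.map f)) :=
  denom_map f g z ▸ hz.map f.mapMatrix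

lemma fracLinear_map (f : R →+* S) (hz : IsUnit (denom g z)) :
    fracLinear (g.map f) (z.map f) = (fracLinear g z).map f := by
  rw [fracLinear, fracLinear, num_map, denom_map, nonsing_inv_map f hz, Matrix.map_mul]

lemma mul_fromRows_one (g : Matrix (n ⊕ n) (n ⊕ n) R) (z : Matrix n n R) :
    g * fromRows z (1 : Matrix n n R) = fromRows (num g z) (denom g z) := by
  conv_lhs => rw [← fromBlocks_toBlocks g, fromBlocks_mul_fromRows, mul_one, mul_one]
  rfl

end CommRing

section StarRing

variable {n R : Type*} [Fintype n] [DecidableEq n] [CommRing R] [StarRing R]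

lemma conjTranspose_fromRows_mul_J_mul_fromRows (A B : Matrix n n R) :
    (fromRows A B)ᴴ * J n R * fromRows A B = Bᴴ * A - Aᴴ * B := by
  simp [J, conjTranspose_fromRows_eq_fromCols_conjTranspose, fromCols_mul_fromBlocks,
    fromCols_mul_fromRows, sub_eq_add_neg]

lemma denom_conjTranspose_mul_num_sub {g : Matrix (n ⊕ n) (n ⊕ n) R} (hg : gᴴ * J n R * g = J n R)
    (z : Matrix n n R) :
    (denom g z)ᴴ * num g z - (num g z)ᴴ * denom g z = z - zᴴ := by
  calc (denom g z)ᴴ * num g z - (num g z)ᴴ * denom g z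
      = (g * fromRows z (1 : Matrix n n R))ᴴ * J n R * (g * fromRows z (1 : Matrix n n R)) := by
        rw [mul_fromRows_one, conjTranspose_fromRows_mul_J_mul_fromRows]
    _ = (fromRows z (1 : Matrix n n R))ᴴ * (gᴴ * J n R * g) *
          fromRows z (1 : Matrix n n R) := by
        simp only [conjTranspose_mul, Matrix.mul_assoc]
    _ = z - zᴴ := by
        rw [hg, conjTranspose_fromRows_mul_J_mul_fromRows, conjTranspose_one, one_mul, mul_one]

end StarRing

section Complex

variable {n : Type*} [Fintype n] [DecidableEq n]

open scoped ComplexOrder ComplexStarModule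

lemma sub_star_eq_smul_imaginaryPart {A : Type*} [AddCommGroup A] [Module ℂ A] [StarAddMonoid A]
    [StarModule ℂ A] (a : A) : a - star a = (2 * Complex.I) • (ℑ a : A) := by
  rw [imaginaryPart_apply_coe, ← Complex.coe_smul, smul_smul, smul_smul]
  simp [mul_assoc]

theorem isUnit_denom_of_posDef_imaginaryPart {g : Matrix (n ⊕ n) (n ⊕ n) ℂ}
    (hg : gᴴ * J n ℂ * g = J n ℂ) {z : Matrix n n ℂ} (hz : (ℑ z : Matrix n n ℂ).PosDef) :
    IsUnit (denom g z) := by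
  rw [← mulVec_injective_iff_isUnit, ← coe_mulVecLin, injective_iff_map_eq_zero]
  intro ξ hξ
  rw [mulVecLin_apply] at hξ
  have isotropic : star ξ ⬝ᵥ ((ℑ z : Matrix n n ℂ) *ᵥ ξ) = 0 := by
    have h : star ξ ⬝ᵥ ((z - zᴴ) *ᵥ ξ) = 0 := by
      rw [← denom_conjTranspose_mul_num_sub hg, sub_mulVec, ← mulVec_mulVec, ← mulVec_mulVec, hξ,
        mulVec_zero, sub_zero, dotProduct_mulVec, ← star_mulVec, hξ, star_zero, zero_dotProduct]
    simpa [← star_eq_conjTranspose, sub_star_eq_smul_imaginaryPart, smul_mulVec] using h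
  by_contra hξ0
  exact (hz.dotProduct_mulVec_pos hξ0).ne' isotropic

lemma conjTranspose_mul_J_mul_map_ofReal {s : Matrix (n ⊕ n) (n ⊕ n) ℝ}
    (hs : s ∈ symplecticGroup n ℝ) :
    (s.map Complex.ofRealHom)ᴴ * J n ℂ * s.map Complex.ofRealHom = J n ℂ := by
  have hH : (s.map Complex.ofRealHom)ᴴ = (s.map Complex.ofRealHom)ᵀ := by
    ext i j
    simp
  rw [hH]
  exact SymplecticGroup.mem_iff'.mp (SymplecticGroup.map_mem hs _)

end Complex

lemma map_ofReal_map_conj {k l : Type*} (A : Matrix k l ℝ) :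
    (A.map Complex.ofRealHom).map (starRingEnd ℂ) = A.map Complex.ofRealHom := by
  ext i j
  simp

open scoped MatrixOrder ComplexOrder in
lemma posDef_map_ofReal {n 𝕜 : Type*} [Finite n] [RCLike 𝕜] {v : Matrix n n ℝ} (hv : v.PosDef) :
    (v.map (RCLike.ofReal : ℝ → 𝕜)).PosDef := by
  classical
  cases nonempty_fintype n
  have hsemi : (v.map (RCLike.ofReal : ℝ → 𝕜)).PosSemidef := by
    obtain ⟨B, rfl⟩ := CStarAlgebra.nonneg_iff_eq_star_mul_self.mp hv.posSemidef.nonneg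
    have hB : (star B * B).map (RCLike.ofReal : ℝ → 𝕜) =
        (B.map RCLike.ofReal)ᴴ * B.map RCLike.ofReal := by
      rw [← conjTranspose_map _ fun r => (RCLike.conj_ofReal r).symm]
      exact Matrix.map_mul (f := algebraMap ℝ 𝕜)
    exact hB ▸ posSemidef_conjTranspose_mul_self _
  exact hsemi.posDef_iff_isUnit.mpr (hv.isUnit.map (algebraMap ℝ 𝕜).mapMatrix)

section SiegelUpperHalfSpace

open scoped ComplexOrder ComplexStarModule

variable {m : ℕ} {s : Matrix (Fin m ⊕ Fin m) (Fin m ⊕ Fin m) ℝ} {x : Matrix (Fin m) (Fin m) ℂ}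

lemma posDef_imaginaryPart_of_inSH (hx : inSH x) : (ℑ x : Matrix (Fin m) (Fin m) ℂ).PosDef := by
  obtain ⟨u, v, hu, hv, rfl⟩ := hx
  have hu_selfAdjoint : IsSelfAdjoint (u.map ((↑) : ℝ → ℂ)) := by
    rw [IsSelfAdjoint, star_eq_conjTranspose,
      ← conjTranspose_map _ fun r => (Complex.conj_ofReal r).symm]
    simp [hu]
  have hv_posDef : (v.map ((↑) : ℝ → ℂ)).PosDef := posDef_map_ofReal hv
  have hv_selfAdjoint : IsSelfAdjoint (v.map ((↑) : ℝ → ℂ)) := hv_posDef.isHermitian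
  simpa [hu_selfAdjoint.imaginaryPart, imaginaryPart_I_smul, hv_selfAdjoint.coe_realPart]
    using hv_posDef

lemma mem_symplecticGroup_of_inSp (hs : inSp s) : s ∈ symplecticGroup (Fin m) ℝ := by
  obtain ⟨hab, hcd, had⟩ := hs
  have hbc : s.toBlocks₁₂ * s.toBlocks₂₁ᵀ - s.toBlocks₁₁ * s.toBlocks₂₂ᵀ = -1 := by
    rw [← neg_sub, had]
  have hda : s.toBlocks₂₂ * s.toBlocks₁₁ᵀ - s.toBlocks₂₁ * s.toBlocks₁₂ᵀ = 1 := by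
    simpa using congrArg transpose had
  rw [SymplecticGroup.mem_iff, ← fromBlocks_toBlocks s, J]
  simp only [fromBlocks_transpose, fromBlocks_multiply]
  congr 1
  · simp [hab]
  · simpa [sub_eq_add_neg] using hbc
  · simpa [sub_eq_add_neg] using hda
  · simp [hcd]

lemma isUnit_denom_of_inSp_of_inSH (hs : inSp s) (hx : inSH x) :
    IsUnit (denom (s.map Complex.ofRealHom) x) :=
  isUnit_denom_of_posDef_imaginaryPart
    (conjTranspose_mul_J_mul_map_ofReal (mem_symplecticGroup_of_inSp hs))
    (posDef_imaginaryPart_of_inSH hx)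

lemma isUnit_denom_conjM (hx : IsUnit (denom (s.map Complex.ofRealHom) x)) :
    IsUnit (denom (s.map Complex.ofRealHom) (conjM x)) := by
  have h := isUnit_denom_map (starRingEnd ℂ) hx
  rwa [map_ofReal_map_conj] at h

lemma mobius_eq_fracLinear (s : Matrix (Fin m ⊕ Fin m) (Fin m ⊕ Fin m) ℝ)
    (x : Matrix (Fin m) (Fin m) ℂ) : mobius s x = fracLinear (s.map Complex.ofRealHom) x :=
  rfl

lemma crossRatio_eq_fourPointCrossRatio (x y : Matrix (Fin m) (Fin m) ℂ) :
    crossRatio x y = fourPointCrossRatio x y (conjM x) (conjM y) :=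
  rfl

lemma conjM_mobius (hx : IsUnit (denom (s.map Complex.ofRealHom) x)) :
    conjM (mobius s x) = mobius s (conjM x) := by
  rw [mobius_eq_fracLinear, mobius_eq_fracLinear, conjM, ← fracLinear_map (starRingEnd ℂ) hx,
    map_ofReal_map_conj, conjM]

theorem charpoly_crossRatio_mobius {y : Matrix (Fin m) (Fin m) ℂ} (hs : inSp s) (hx : inSH x)
    (hy : inSH y) :
    (crossRatio (mobius s x) (mobius s y)).charpoly = (crossRatio x y).charpoly := by
  have hg : IsUnit (s.map Complex.ofRealHom) :=
    (isUnit_iff_isUnit_det _).mpr <| SymplecticGroup.symplectic_det <|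
      SymplecticGroup.map_mem (mem_symplecticGroup_of_inSp hs) _
  have hdx := isUnit_denom_of_inSp_of_inSH hs hx
  have hdy := isUnit_denom_of_inSp_of_inSH hs hy
  rw [crossRatio_eq_fourPointCrossRatio, crossRatio_eq_fourPointCrossRatio, conjM_mobius hdx,
    conjM_mobius hdy]
  simp only [mobius_eq_fracLinear]
  exact charpoly_fourPointCrossRatio_fracLinear hg hdx hdy (isUnit_denom_conjM hdx)
    (isUnit_denom_conjM hdy)

end SiegelUpperHalfSpace

end Siegel

/-- the characteristic polynomial of the cross-ratio, and hence
the Siegel distance, is invariant under the symplectic Möbius action. -/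
theorem siegel_distance_symplectic_invariance (m : ℕ) (hm : 1 ≤ m)
    (s : Matrix (Fin m ⊕ Fin m) (Fin m ⊕ Fin m) ℝ) (hs : inSp s)
    (x y : Matrix (Fin m) (Fin m) ℂ) (hx : inSH x) (hy : inSH y) :
    (crossRatio (mobius s x) (mobius s y)).charpoly = (crossRatio x y).charpoly ∧
    dSH (mobius s x) (mobius s y) = dSH x y := by
  have hchar := Siegel.charpoly_crossRatio_mobius hs hx hy
  exact ⟨hchar, by rw [dSH, dSH, hchar]⟩
end

section
/- Let m ≥ 1 and x, y ∈ SH_m. Then the multiset of eigenvalues (roots of the characteristic polynomial over ℂ, with multiplicity) of the cross-ratio matrix R(x,y) equals that of R(y,x); consequently the Siegel distance is symmetric: d_SH(x, y) = d_SH(y, x). -/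
open Matrix

/-!
Reversing the order of a product of symmetric matrices transposes it, and cyclic permutations do not
change the characteristic polynomial; hence `A B C D` and `A D C B` have the same one. Swapping `x`
and `y` changes the sign of all four factors of the cross-ratio and interchanges its two inverted
factors, so `R(x,y)` and `R(y,x)` are two such products.
-/

section CommRing

variable {n R : Type*} [Fintype n] [DecidableEq n] [CommRing R]

theorem matrix_inv_neg (A : Matrix n n R) : (-A)⁻¹ = -A⁻¹ := by
  have inv_neg_one : (-1 : Matrix n n R)⁻¹ = -1 := inv_eq_right_inv (by simp)
  rw [← neg_one_mul, Matrix.mul_inv_rev, inv_neg_one, mul_neg_one]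

theorem charpoly_mul_mul_mul_comm_of_isSymm {A B C D : Matrix n n R}
    (hA : A.IsSymm) (hB : B.IsSymm) (hC : C.IsSymm) (hD : D.IsSymm) :
    (A * B * C * D).charpoly = (A * D * C * B).charpoly :=
  calc (A * B * C * D).charpoly
    _ = (A * B * C * D)ᵀ.charpoly := (charpoly_transpose _).symm
    _ = (D * C * B * A).charpoly := by
      simp only [transpose_mul, hA.eq, hB.eq, hC.eq, hD.eq, Matrix.mul_assoc]
    _ = (A * (D * C * B)).charpoly := charpoly_mul_comm _ _
    _ = (A * D * C * B).charpoly := by simp only [Matrix.mul_assoc]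

end CommRing

section CrossRatio

variable {m : ℕ}

theorem crossRatio_swap (x y : Matrix (Fin m) (Fin m) ℂ) :
    crossRatio y x =
      (x - y) * (conjM x - y)⁻¹ * (conjM x - conjM y) * (x - conjM y)⁻¹ := by
  rw [crossRatio, ← neg_sub x y, ← neg_sub (conjM x) y, ← neg_sub (conjM x) (conjM y),
    ← neg_sub x (conjM y)]
  simp only [matrix_inv_neg, neg_mul, mul_neg, neg_neg]

theorem charpoly_crossRatio_comm {x y : Matrix (Fin m) (Fin m) ℂ}
    (hx : x.IsSymm) (hy : y.IsSymm) :
    (crossRatio x y).charpoly = (crossRatio y x).charpoly := by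
  have hx' : (conjM x).IsSymm := hx.map _
  have hy' : (conjM y).IsSymm := hy.map _
  rw [crossRatio_swap x y, crossRatio]
  exact charpoly_mul_mul_mul_comm_of_isSymm
    (hx.sub hy) (hx.sub hy').inv (hx'.sub hy') (hx'.sub hy).inv

theorem siegel_distance_symmetric_general {x y : Matrix (Fin m) (Fin m) ℂ}
    (hx : x.IsSymm) (hy : y.IsSymm) :
    (crossRatio x y).charpoly.roots = (crossRatio y x).charpoly.roots ∧ dSH x y = dSH y x := by
  rw [dSH, dSH, charpoly_crossRatio_comm hx hy]
  exact ⟨rfl, rfl⟩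

end CrossRatio

theorem isSymm_map_add_I_smul_map {n : Type*} {u v : Matrix n n ℝ}
    (hu : u.IsSymm) (hv : v.IsSymm) :
    (u.map ((↑) : ℝ → ℂ) + Complex.I • v.map ((↑) : ℝ → ℂ)).IsSymm :=
  (hu.map _).add ((hv.map _).smul _)

/-- the multiset of eigenvalues of R(x,y) equals that of R(y,x);
consequently the Siegel distance is symmetric. -/
theorem siegel_distance_symmetric (m : ℕ) (hm : 1 ≤ m)
    (u v u' v' : Matrix (Fin m) (Fin m) ℝ)
    (hu : uᵀ = u) (hv : v.PosDef) (hu' : u'ᵀ = u') (hv' : v'.PosDef)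
    (x y : Matrix (Fin m) (Fin m) ℂ)
    (hx : x = u.map ((↑) : ℝ → ℂ) + Complex.I • v.map ((↑) : ℝ → ℂ))
    (hy : y = u'.map ((↑) : ℝ → ℂ) + Complex.I • v'.map ((↑) : ℝ → ℂ)) :
    (crossRatio x y).charpoly.roots = (crossRatio y x).charpoly.roots ∧
    dSH x y = dSH y x := by
  subst hx hy
  exact siegel_distance_symmetric_general
    (isSymm_map_add_I_smul_map hu (isHermitian_iff_isSymm.1 hv.isHermitian))
    (isSymm_map_add_I_smul_map hu' (isHermitian_iff_isSymm.1 hv'.isHermitian))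
end

section
/- Let m ≥ 1. There exists a constant c > 0 (depending only on m) such that for all x, y ∈ SH_m, the Frobenius norm of log(φ(x)^{-1} φ(y) φ(y)ᵀ φ(x)^{-ᵀ}) equals c · d_SH(x, y); i.e., the norm ‖⊖x ⊕ y‖_S induced by the quotient-structure inner product is proportional to the Siegel Riemannian distance. (First part of Proposition 1.) -/
open Matrix

/-- The Frobenius norm. -/
noncomputable def frobNorm {n : Type*} [Fintype n] (A : Matrix n n ℝ) : ℝ :=
  Real.sqrt (Matrix.trace (Aᵀ * A))

/-!
Put `S x = φ(x) φ(x)ᵀ`. Multiplying by `φ(x)` on the left and `φ(x)ᵀ` on the right takes the pair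
`1, exp L` to `S x, S y`, so the Cayley ratio `(S y - S x) (S y + S x)⁻¹` is conjugate to
`(exp L - 1) (exp L + 1)⁻¹ = tanh (L / 2)`. Over `ℂ`, the bases `(1, -x), (1, -x̄)` and
`(1, -y), (1, -ȳ)` bring `S x` and `S y` simultaneously to the form

`[[-(x - y), x - ȳ], [x̄ - y, -(x̄ - ȳ)]]` and `[[x - y, x - ȳ], [x̄ - y, x̄ - ȳ]]`,

so their Cayley ratio is block antidiagonal and its square has the eigenvalues of `R(x, y)`, each
counted twice. Hence `tanh² (ℓ / 2)`, for `ℓ` an eigenvalue of `L`, runs twice through the `r_j`.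
As `log ((1 + |tanh (ℓ / 2)|) / (1 - |tanh (ℓ / 2)|)) = |ℓ|`, the sum of the `ℓ²` is
`2 d_SH(x, y)²`.
-/

section CayleyRatio

variable {n R S : Type*} [Fintype n] [DecidableEq n] [CommRing R] [CommRing S]

theorem map_nonsing_inv_of_isUnit (f : R →+* S) {A : Matrix n n R} (hA : IsUnit A) :
    A⁻¹.map f = (A.map f)⁻¹ := by
  refine (inv_eq_right_inv ?_).symm
  rw [← Matrix.map_mul, mul_nonsing_inv A ((isUnit_iff_isUnit_det A).mp hA),
    Matrix.map_one f f.map_zero f.map_one]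

/-- The Cayley transform of `B` relative to `A`. For `A = 1` it is the classical Cayley
transform of `B`. -/
noncomputable def cayleyRatio (A B : Matrix n n R) : Matrix n n R :=
  (B - A) * (B + A)⁻¹

theorem cayleyRatio_mul_mul (U A B : Matrix n n R) {V : Matrix n n R} (hV : IsUnit V) :
    cayleyRatio (U * A * V) (U * B * V) = U * cayleyRatio A B * U⁻¹ := by
  have hV' : V * V⁻¹ = 1 := mul_nonsing_inv V ((isUnit_iff_isUnit_det V).mp hV)
  calc (U * B * V - U * A * V) * (U * B * V + U * A * V)⁻¹
      = U * (B - A) * V * (U * (B + A) * V)⁻¹ := by noncomm_ring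
    _ = U * (B - A) * (V * V⁻¹) * (B + A)⁻¹ * U⁻¹ := by
      simp only [Matrix.mul_inv_rev, mul_assoc]
    _ = U * ((B - A) * (B + A)⁻¹) * U⁻¹ := by rw [hV']; noncomm_ring

theorem charpoly_cayleyRatio_mul_mul_sq {U V : Matrix n n R} (hU : IsUnit U) (hV : IsUnit V)
    (A B : Matrix n n R) :
    (cayleyRatio (U * A * V) (U * B * V) ^ 2).charpoly = (cayleyRatio A B ^ 2).charpoly := by
  obtain ⟨U, rfl⟩ := hU
  rw [cayleyRatio_mul_mul _ _ _ hV, ← coe_units_inv, Units.conj_pow, coe_units_inv,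
    charpoly_units_conj]

theorem map_cayleyRatio (f : R →+* S) {A B : Matrix n n R} (h : IsUnit (B + A)) :
    (cayleyRatio A B).map f = cayleyRatio (A.map f) (B.map f) := by
  rw [cayleyRatio, Matrix.map_mul, map_nonsing_inv_of_isUnit f h, Matrix.map_sub f f.map_sub,
    Matrix.map_add f f.map_add, cayleyRatio]

theorem charpoly_cayleyRatio_map_mul_mul_sq (f : R →+* S) {U V A B : Matrix n n R} (hU : IsUnit U)
    (hV : IsUnit V) (hAB : IsUnit (B + A)) :
    (cayleyRatio ((U * A * V).map f) ((U * B * V).map f) ^ 2).charpoly =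
      ((cayleyRatio A B).map f ^ 2).charpoly := by
  simp only [Matrix.map_mul, map_cayleyRatio f hAB]
  exact charpoly_cayleyRatio_mul_mul_sq (hU.map f.mapMatrix) (hV.map f.mapMatrix) _ _

theorem cayleyRatio_fromBlocks [Invertible (2 : R)] (A D : Matrix n n R) {B C : Matrix n n R}
    (hB : IsUnit B) (hC : IsUnit C) :
    cayleyRatio (fromBlocks (-A) B C (-D)) (fromBlocks A B C D) =
      fromBlocks 0 (A * C⁻¹) (D * B⁻¹) 0 := by
  have hB' : B * B⁻¹ = 1 := mul_nonsing_inv B ((isUnit_iff_isUnit_det B).mp hB)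
  have hC' : C * C⁻¹ = 1 := mul_nonsing_inv C ((isUnit_iff_isUnit_det C).mp hC)
  have hinv : (fromBlocks A B C D + fromBlocks (-A) B C (-D))⁻¹ =
      fromBlocks 0 (⅟(2 : R) • C⁻¹) (⅟(2 : R) • B⁻¹) 0 := by
    refine inv_eq_right_inv ?_
    simp [fromBlocks_add, fromBlocks_multiply, add_mul, hB', hC', ← add_smul]
  rw [cayleyRatio, hinv, sub_eq_add_neg, fromBlocks_neg, fromBlocks_add, fromBlocks_multiply]
  simp [add_mul, ← add_smul]

theorem charpoly_fromBlocks_antidiagonal_sq (B C : Matrix n n R) :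
    (fromBlocks 0 B C 0 ^ 2).charpoly = (B * C).charpoly ^ 2 := by
  rw [sq, fromBlocks_multiply]
  simp only [zero_mul, mul_zero, add_zero, zero_add]
  rw [charpoly_fromBlocks_zero₁₂, charpoly_mul_comm C, sq]

theorem charpoly_mul_inv_mul_mul_inv_of_isSymm {A B C D : Matrix n n R} (hA : A.IsSymm)
    (hB : B.IsSymm) (hC : C.IsSymm) (hD : D.IsSymm) :
    (A * C⁻¹ * (D * B⁻¹)).charpoly = (A * B⁻¹ * D * C⁻¹).charpoly := by
  rw [← charpoly_transpose]
  simp only [transpose_mul, transpose_nonsing_inv, hA.eq, hB.eq, hC.eq, hD.eq]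
  rw [← mul_assoc, charpoly_mul_comm]
  simp only [mul_assoc]

end CayleyRatio

section TanhHalf

theorem abs_tanh (t : ℝ) : |Real.tanh t| = Real.tanh |t| := by
  rw [Real.tanh_eq_sinh_div_cosh, abs_div, Real.abs_sinh, abs_of_pos (Real.cosh_pos t),
    ← Real.cosh_abs, ← Real.tanh_eq_sinh_div_cosh]

theorem tanh_half_mul_exp_add_one (t : ℝ) :
    Real.tanh (t / 2) * (Real.exp t + 1) = Real.exp t - 1 := by
  have h : Real.exp t = Real.exp (t / 2) * Real.exp (t / 2) := by rw [← Real.exp_add, add_halves]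
  rw [Real.tanh_eq, Real.exp_neg, h]
  field_simp

theorem log_one_add_abs_tanh_half_div (t : ℝ) :
    Real.log ((1 + |Real.tanh (t / 2)|) / (1 - |Real.tanh (t / 2)|)) = |t| := by
  have hmem : |Real.tanh (t / 2)| ∈ Set.Icc (-1) 1 :=
    ⟨by linarith [abs_nonneg (Real.tanh (t / 2))], (Real.abs_tanh_lt_one _).le⟩
  have h := Real.artanh_eq_half_log hmem
  rw [abs_tanh, Real.artanh_tanh, ← abs_tanh, abs_div, abs_two] at h
  linarith

end TanhHalf

section Exponential

open Polynomial

variable {n 𝕜 : Type*} [Fintype n] [DecidableEq n] [RCLike 𝕜] {L : Matrix n n 𝕜}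

open scoped Matrix.Norms.L2Operator in
theorem cfc_exp_eq_exp (hL : L.IsHermitian) : cfc Real.exp L = NormedSpace.exp L := by
  let _ : NormedAlgebra ℝ (Matrix n n 𝕜) :=
    { norm_smul_le r A := by rw [← algebraMap_smul 𝕜 r A, norm_smul, norm_algebraMap'] }
  exact CFC.real_exp_eq_normedSpace_exp hL

theorem cfc_exp_add_one (hL : L.IsHermitian) :
    cfc (fun t ↦ Real.exp t + 1) L = NormedSpace.exp L + 1 := by
  have hsa : IsSelfAdjoint L := hL
  rw [cfc_add_const (1 : ℝ) Real.exp L, cfc_exp_eq_exp hL, map_one]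

theorem isUnit_exp_add_one (hL : L.IsHermitian) : IsUnit (NormedSpace.exp L + 1) := by
  have hsa : IsSelfAdjoint L := hL
  rw [← cfc_exp_add_one hL]
  exact (isUnit_cfc_iff _ L).mpr fun t _ ↦ by positivity

theorem cayleyRatio_one_exp (hL : L.IsHermitian) :
    cayleyRatio 1 (NormedSpace.exp L) = cfc (fun t ↦ Real.tanh (t / 2)) L := by
  have hsa : IsSelfAdjoint L := hL
  have htanh := L.finite_real_spectrum.continuousOn fun t ↦ Real.tanh (t / 2)
  have hmul : cfc (fun t ↦ Real.tanh (t / 2)) L * (NormedSpace.exp L + 1) =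
      NormedSpace.exp L - 1 := by
    rw [← cfc_exp_add_one hL, ← cfc_mul _ _ L]
    simp only [tanh_half_mul_exp_add_one]
    rw [cfc_sub Real.exp _ L, cfc_exp_eq_exp hL, cfc_const_one ℝ L]
  rw [cayleyRatio, ← hmul, mul_nonsing_inv_cancel_right]
  exact (isUnit_iff_isUnit_det _).mp (isUnit_exp_add_one hL)

theorem charpoly_cayleyRatio_one_exp_sq (hL : L.IsHermitian) :
    (cayleyRatio 1 (NormedSpace.exp L) ^ 2).charpoly =
      ∏ i, (X - C ((Real.tanh (hL.eigenvalues i / 2) ^ 2 : ℝ) : 𝕜)) := by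
  have hsa : IsSelfAdjoint L := hL
  have htanh := L.finite_real_spectrum.continuousOn fun t ↦ Real.tanh (t / 2)
  rw [cayleyRatio_one_exp hL, ← cfc_pow _ 2 L, hL.charpoly_cfc_eq]

theorem trace_cfc (hL : L.IsHermitian) (f : ℝ → ℝ) :
    (cfc f L).trace = ∑ i, (f (hL.eigenvalues i) : 𝕜) := by
  rw [hL.cfc_eq, IsHermitian.cfc, Unitary.conjStarAlgAut_apply, trace_mul_comm, ← mul_assoc]
  simp [trace]

theorem trace_sq_eq_sum_eigenvalues_sq (hL : L.IsHermitian) :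
    (L ^ 2).trace = ∑ i, ((hL.eigenvalues i ^ 2 : ℝ) : 𝕜) := by
  have hsa : IsSelfAdjoint L := hL
  rw [← cfc_pow_id (R := ℝ) L 2, trace_cfc hL]

theorem sum_log_sq_roots_charpoly_cayleyRatio_one_exp_sq {L : Matrix n n ℝ}
    (hL : L.IsHermitian) :
    ((((cayleyRatio 1 (NormedSpace.exp L)).map Complex.ofRealHom ^ 2).charpoly.roots).map
      fun z ↦ Real.log ((1 + √z.re) / (1 - √z.re)) ^ 2).sum = (L ^ 2).trace := by
  have hcharpoly : ((cayleyRatio 1 (NormedSpace.exp L)).map Complex.ofRealHom ^ 2).charpoly =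
      ∏ i, (X - C (Complex.ofRealHom (Real.tanh (hL.eigenvalues i / 2) ^ 2))) := by
    simp only [← Matrix.map_pow, charpoly_map, charpoly_cayleyRatio_one_exp_sq hL,
      Polynomial.map_prod, Polynomial.map_sub, map_X, map_C, RCLike.ofReal_real_eq_id, id]
  rw [hcharpoly, roots_prod _ _ (Finset.prod_ne_zero_iff.mpr fun i _ ↦ X_sub_C_ne_zero _)]
  simp only [roots_X_sub_C, Multiset.bind_singleton, Multiset.map_map, Function.comp_apply,
    Complex.ofRealHom_eq_coe, Complex.ofReal_re, Real.sqrt_sq_eq_abs,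
    log_one_add_abs_tanh_half_div, sq_abs, trace_sq_eq_sum_eigenvalues_sq hL,
    RCLike.ofReal_real_eq_id, id]
  rfl

end Exponential

section SiegelSpace

variable {n : Type*}

/-- The complex matrix `u + i v`. It is a point of the Siegel upper half space when `u` is
symmetric and `v` is positive definite, and its conjugate is `ofReIm u (-v)`. -/
noncomputable def ofReIm (u v : Matrix n n ℝ) : Matrix n n ℂ :=
  u.map ((↑) : ℝ → ℂ) + Complex.I • v.map ((↑) : ℝ → ℂ)

theorem ofReIm_apply (u v : Matrix n n ℝ) (i j : n) :
    ofReIm u v i j = u i j + Complex.I * v i j :=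
  rfl

theorem ofReIm_zero_right (u : Matrix n n ℝ) : ofReIm u 0 = u.map Complex.ofRealHom := by
  ext i j
  simp [ofReIm_apply]

theorem ofReIm_add (u v u' v' : Matrix n n ℝ) :
    ofReIm u v + ofReIm u' v' = ofReIm (u + u') (v + v') := by
  ext i j
  simp only [ofReIm_apply, Matrix.add_apply, Complex.ofReal_add]
  ring

theorem ofReIm_neg (u v : Matrix n n ℝ) : ofReIm (-u) (-v) = -ofReIm u v := by
  ext i j
  simp only [ofReIm_apply, Matrix.neg_apply, Complex.ofReal_neg]
  ring

theorem ofReIm_sub (u v u' v' : Matrix n n ℝ) :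
    ofReIm u v - ofReIm u' v' = ofReIm (u - u') (v - v') := by
  simp only [sub_eq_add_neg, ← ofReIm_neg, ofReIm_add]

theorem I_smul_ofReIm (u v : Matrix n n ℝ) : Complex.I • ofReIm u v = ofReIm (-v) u := by
  ext i j
  simp only [ofReIm_apply, Matrix.smul_apply, Matrix.neg_apply, Complex.ofReal_neg, smul_eq_mul]
  linear_combination (v i j : ℂ) * Complex.I_mul_I

theorem isSymm_ofReIm {u v : Matrix n n ℝ} (hu : u.IsSymm) (hv : v.IsSymm) :
    (ofReIm u v).IsSymm :=
  (hu.map _).add ((hv.map _).smul _)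

theorem conjM_ofReIm {m : ℕ} (u v : Matrix (Fin m) (Fin m) ℝ) :
    conjM (ofReIm u v) = ofReIm u (-v) := by
  ext i j
  simp [conjM, ofReIm]

theorem ofReIm_mul [Fintype n] (u v u' v' : Matrix n n ℝ) :
    ofReIm u v * ofReIm u' v' = ofReIm (u * u' - v * v') (u * v' + v * u') := by
  ext i j
  simp only [ofReIm_apply, mul_apply, Matrix.sub_apply, Matrix.add_apply, Complex.ofReal_sub,
    Complex.ofReal_add, Complex.ofReal_sum, Complex.ofReal_mul, mul_add, Finset.mul_sum,
    ← Finset.sum_add_distrib, ← Finset.sum_sub_distrib]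
  refine Finset.sum_congr rfl fun k _ ↦ ?_
  linear_combination (v i k * v' k j : ℂ) * Complex.I_mul_I

variable [DecidableEq n]

/-- With `x = u + i v` and `Ω = [[0, -1], [1, 0]]`, the rows `(1, -x)` and `(1, -x̄)` of this matrix
span the eigenspaces of the complex structure `Ω⁻¹ φ(x) φ(x)ᵀ`, which this matrix thus
diagonalizes. -/
noncomputable def siegelFrame (u v : Matrix n n ℝ) : Matrix (n ⊕ n) (n ⊕ n) ℂ :=
  fromBlocks 1 (-ofReIm u v) 1 (-ofReIm u (-v))

/-- The eigenvalues `-i` and `i` of the complex structure diagonalized by `siegelFrame`. -/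
def frameEigenvalues (n : Type*) [DecidableEq n] : Matrix (n ⊕ n) (n ⊕ n) ℂ :=
  fromBlocks (-Complex.I • 1) 0 0 (Complex.I • 1)

theorem transpose_frameEigenvalues : (frameEigenvalues n)ᵀ = frameEigenvalues n := by
  simp [frameEigenvalues, fromBlocks_transpose]

variable [Fintype n]

theorem isUnit_ofReIm {u v : Matrix n n ℝ} (hu : u.IsSymm) (hv : v.PosDef) :
    IsUnit (ofReIm u v) := by
  have hdet : v.det ≠ 0 := hv.det_pos.ne'
  have hprod : ofReIm u v * (ofReIm v⁻¹ 0 * ofReIm u (-v)) = ofReIm (v + u * v⁻¹ * u) 0 := by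
    rw [ofReIm_mul, ofReIm_mul]
    congr 1 <;> simp [hdet, mul_assoc, add_comm]
  have hpos : (v + u * v⁻¹ * u).PosDef := by
    refine hv.add_posSemidef ?_
    simpa [conjTranspose_eq_transpose_of_trivial, hu.eq] using
      hv.inv.posSemidef.mul_mul_conjTranspose_same u
  have hunit : IsUnit (ofReIm (v + u * v⁻¹ * u) 0) := by
    rw [ofReIm_zero_right]
    exact hpos.isUnit.map Complex.ofRealHom.mapMatrix
  exact isUnit_of_mul_isUnit_left (hprod ▸ hunit)

/-- The matrix `φ(x) φ(x)ᵀ` for `x = u + i v`, in a form without square roots. -/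
noncomputable def siegelGram (u v : Matrix n n ℝ) : Matrix (n ⊕ n) (n ⊕ n) ℝ :=
  fromBlocks (v + u * v⁻¹ * u) (u * v⁻¹) (v⁻¹ * u) v⁻¹

theorem fromBlocks_mul_transpose_eq_siegelGram {u r : Matrix n n ℝ} (hu : u.IsSymm)
    (hr : r.IsSymm) :
    fromBlocks r (u * r⁻¹) 0 r⁻¹ * (fromBlocks r (u * r⁻¹) 0 r⁻¹)ᵀ = siegelGram u (r * r) := by
  simp [siegelGram, fromBlocks_transpose, fromBlocks_multiply, transpose_nonsing_inv, hu.eq,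
    hr.eq, Matrix.mul_inv_rev, mul_assoc]

theorem isSymm_siegelGram {u v : Matrix n n ℝ} (hu : u.IsSymm) (hv : v.IsSymm) :
    (siegelGram u v).IsSymm := by
  simp [IsSymm, siegelGram, fromBlocks_transpose, transpose_nonsing_inv, hu.eq, hv.eq, mul_assoc]

theorem isUnit_siegelGram (u : Matrix n n ℝ) {v : Matrix n n ℝ} (hv : IsUnit v) :
    IsUnit (siegelGram u v) := by
  have hfactor :
      siegelGram u v = fromBlocks 1 u 0 1 * fromBlocks v 0 (v⁻¹ * u) v⁻¹ := by
    simp [siegelGram, fromBlocks_multiply, mul_assoc]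
  rw [hfactor]
  exact (isUnit_fromBlocks_zero₂₁.mpr ⟨isUnit_one, isUnit_one⟩).mul
    (isUnit_fromBlocks_zero₁₂.mpr ⟨hv, isUnit_nonsing_inv_iff.mpr hv⟩)

theorem isUnit_siegelFrame (u : Matrix n n ℝ) {v : Matrix n n ℝ} (hv : v.PosDef) :
    IsUnit (siegelFrame u v) := by
  have hdiff : -ofReIm u (-v) - 1 * -ofReIm u v = ofReIm 0 (v + v) := by
    rw [one_mul, ← ofReIm_neg, ← ofReIm_neg, ofReIm_sub]
    simp
  rw [siegelFrame, isUnit_iff_isUnit_det, det_fromBlocks_one₁₁, hdiff, ← isUnit_iff_isUnit_det]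
  exact isUnit_ofReIm isSymm_zero (hv.add hv)

theorem frameEigenvalues_mul_self : frameEigenvalues n * frameEigenvalues n = -1 := by
  simp [frameEigenvalues, fromBlocks_multiply, smul_smul, ← fromBlocks_one, fromBlocks_neg]

theorem isUnit_frameEigenvalues : IsUnit (frameEigenvalues n) :=
  isUnit_of_mul_isUnit_left (frameEigenvalues_mul_self (n := n) ▸ isUnit_one.neg)

theorem siegelFrame_mul_siegelGram (u : Matrix n n ℝ) {v : Matrix n n ℝ} (hv : IsUnit v) :
    siegelFrame u v * (siegelGram u v).map Complex.ofRealHom =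
      frameEigenvalues n * fromBlocks (ofReIm u v) 1 (ofReIm u (-v)) 1 := by
  have hdet : v.det ≠ 0 := ((isUnit_iff_isUnit_det v).mp hv).ne_zero
  have hone : (1 : Matrix n n ℂ) = ofReIm 1 0 := by simp [ofReIm_zero_right]
  rw [siegelGram, fromBlocks_map]
  simp only [siegelFrame, frameEigenvalues, fromBlocks_multiply, ← ofReIm_zero_right, hone,
    neg_smul, I_smul_ofReIm, ← ofReIm_neg, ofReIm_mul, ofReIm_add]
  simp [hdet, mul_assoc]

theorem siegelFrame_mul_left_siegelGram_mul_transpose_siegelFrame (u : Matrix n n ℝ)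
    {v u' v' : Matrix n n ℝ} (hv : IsUnit v) (hu' : u'.IsSymm) (hv' : v'.IsSymm) :
    siegelFrame u v * (siegelGram u v).map Complex.ofRealHom *
        ((siegelFrame u' v')ᵀ * frameEigenvalues n) =
      fromBlocks (-(ofReIm u v - ofReIm u' v')) (ofReIm u v - ofReIm u' (-v'))
        (ofReIm u (-v) - ofReIm u' v') (-(ofReIm u (-v) - ofReIm u' (-v'))) := by
  have hy := (isSymm_ofReIm hu' hv').eq
  have hyc := (isSymm_ofReIm hu' hv'.neg).eq
  rw [siegelFrame_mul_siegelGram u hv, siegelFrame, fromBlocks_transpose, frameEigenvalues]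
  simp [fromBlocks_multiply, hy, hyc, smul_smul, sub_eq_add_neg, add_comm]

theorem siegelFrame_mul_right_siegelGram_mul_transpose_siegelFrame (u v : Matrix n n ℝ)
    {u' v' : Matrix n n ℝ} (hu' : u'.IsSymm) (hv' : v'.IsSymm) (hv'u : IsUnit v') :
    siegelFrame u v * (siegelGram u' v').map Complex.ofRealHom *
        ((siegelFrame u' v')ᵀ * frameEigenvalues n) =
      fromBlocks (ofReIm u v - ofReIm u' v') (ofReIm u v - ofReIm u' (-v'))
        (ofReIm u (-v) - ofReIm u' v') (ofReIm u (-v) - ofReIm u' (-v')) := by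
  have hy := (isSymm_ofReIm hu' hv').eq
  have hyc := (isSymm_ofReIm hu' hv'.neg).eq
  have hGram : (siegelGram u' v').map Complex.ofRealHom * (siegelFrame u' v')ᵀ =
      fromBlocks (ofReIm u' v') (ofReIm u' (-v')) 1 1 * frameEigenvalues n := by
    have h := congrArg transpose (siegelFrame_mul_siegelGram u' hv'u)
    rwa [transpose_mul, transpose_mul, ← transpose_map, (isSymm_siegelGram hu' hv').eq,
      transpose_frameEigenvalues, fromBlocks_transpose, hy, hyc, transpose_one] at h
  calc
    _ = siegelFrame u v * (fromBlocks (ofReIm u' v') (ofReIm u' (-v')) 1 1 *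
        (frameEigenvalues n * frameEigenvalues n)) := by
      rw [← mul_assoc _ (frameEigenvalues n), ← hGram]
      simp only [mul_assoc]
    _ = _ := by
      rw [frameEigenvalues_mul_self, siegelFrame]
      simp [fromBlocks_multiply, fromBlocks_neg, sub_eq_add_neg, add_comm]

theorem charpoly_cayleyRatio_siegelGram_sq {m : ℕ} {u v u' v' : Matrix (Fin m) (Fin m) ℝ}
    (hu : u.IsSymm) (hv : v.PosDef) (hu' : u'.IsSymm) (hv' : v'.PosDef) :
    (cayleyRatio ((siegelGram u v).map Complex.ofRealHom)
      ((siegelGram u' v').map Complex.ofRealHom) ^ 2).charpoly =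
      (crossRatio (ofReIm u v) (ofReIm u' v')).charpoly ^ 2 := by
  have hvs : v.IsSymm := isHermitian_iff_isSymm.mp hv.isHermitian
  have hvs' : v'.IsSymm := isHermitian_iff_isSymm.mp hv'.isHermitian
  have hb : IsUnit (ofReIm u v - ofReIm u' (-v')) := by
    rw [ofReIm_sub, sub_neg_eq_add]
    exact isUnit_ofReIm (hu.sub hu') (hv.add hv')
  have hc : IsUnit (ofReIm u (-v) - ofReIm u' v') := by
    rw [← neg_sub, ofReIm_sub, sub_neg_eq_add]
    exact (isUnit_ofReIm (hu'.sub hu) (hv'.add hv)).neg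
  have hsymm {w w' : Matrix (Fin m) (Fin m) ℝ} (hw : w.IsSymm) (hw' : w'.IsSymm) :
      (ofReIm u w - ofReIm u' w').IsSymm :=
    (isSymm_ofReIm hu hw).sub (isSymm_ofReIm hu' hw')
  rw [← charpoly_cayleyRatio_mul_mul_sq (isUnit_siegelFrame u hv)
      (((isUnit_transpose _).mpr (isUnit_siegelFrame u' hv')).mul isUnit_frameEigenvalues),
    siegelFrame_mul_left_siegelGram_mul_transpose_siegelFrame u hv.isUnit hu' hvs',
    siegelFrame_mul_right_siegelGram_mul_transpose_siegelFrame u v hu' hvs' hv'.isUnit,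
    cayleyRatio_fromBlocks _ _ hb hc,
    charpoly_fromBlocks_antidiagonal_sq,
    charpoly_mul_inv_mul_mul_inv_of_isSymm (hsymm hvs hvs') (hsymm hvs hvs'.neg)
      (hsymm hvs.neg hvs') (hsymm hvs.neg hvs'.neg), crossRatio, conjM_ofReIm, conjM_ofReIm]

end SiegelSpace

theorem quotient_norm_proportional_to_siegel_distance_general {m : ℕ}
    {u v u' v' : Matrix (Fin m) (Fin m) ℝ} (hu : u.IsSymm) (hv : v.PosDef) (hu' : u'.IsSymm)
    (hv' : v'.PosDef) {F G L : Matrix (Fin m ⊕ Fin m) (Fin m ⊕ Fin m) ℝ}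
    (hF : F * Fᵀ = siegelGram u v) (hG : G * Gᵀ = siegelGram u' v') (hL : L.IsSymm)
    (hexp : NormedSpace.exp L = F⁻¹ * G * Gᵀ * F⁻¹ᵀ) :
    frobNorm L = √2 * dSH (ofReIm u v) (ofReIm u' v') := by
  have hLh : L.IsHermitian := isHermitian_iff_isSymm.mpr hL
  have hFu : IsUnit F := isUnit_of_mul_isUnit_left (hF ▸ isUnit_siegelGram u hv.isUnit)
  have hFdet : F.det ≠ 0 := ((isUnit_iff_isUnit_det F).mp hFu).ne_zero
  have hGramx : F * 1 * Fᵀ = siegelGram u v := by rw [mul_one, hF]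
  have hGramy : F * NormedSpace.exp L * Fᵀ = siegelGram u' v' := by
    rw [hexp, ← hG, transpose_nonsing_inv]
    simp [mul_assoc, hFdet]
  have hcharpoly : ((cayleyRatio 1 (NormedSpace.exp L)).map Complex.ofRealHom ^ 2).charpoly =
      (crossRatio (ofReIm u v) (ofReIm u' v')).charpoly ^ 2 := by
    rw [← charpoly_cayleyRatio_siegelGram_sq hu hv hu' hv', ← hGramx, ← hGramy,
      charpoly_cayleyRatio_map_mul_mul_sq _ hFu ((isUnit_transpose F).mpr hFu)
        (isUnit_exp_add_one hLh)]
  rw [frobNorm, hL.eq, ← sq, ← sum_log_sq_roots_charpoly_cayleyRatio_one_exp_sq hLh, hcharpoly,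
    Polynomial.roots_pow, Multiset.map_nsmul, Multiset.sum_nsmul, nsmul_eq_mul,
    Real.sqrt_mul (by simp), dSH, Nat.cast_ofNat]

/-- first part of Proposition 1: there is a constant c > 0,
depending only on m, such that for all x = u + iv and y = u' + iv' in the
Siegel upper half space (with symplectic representatives φ(x), φ(y) built
from the square roots r, r' of v, v'), the Frobenius norm of the principal
logarithm L of φ(x)⁻¹ φ(y) φ(y)ᵀ φ(x)⁻ᵀ equals c · d_SH(x,y). -/
theorem quotient_norm_proportional_to_siegel_distance (m : ℕ) (hm : 1 ≤ m) :
    ∃ c : ℝ, 0 < c ∧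
      ∀ (u v u' v' : Matrix (Fin m) (Fin m) ℝ),
        uᵀ = u → v.PosDef → u'ᵀ = u' → v'.PosDef →
      ∀ (x y : Matrix (Fin m) (Fin m) ℂ),
        x = u.map ((↑) : ℝ → ℂ) + Complex.I • v.map ((↑) : ℝ → ℂ) →
        y = u'.map ((↑) : ℝ → ℂ) + Complex.I • v'.map ((↑) : ℝ → ℂ) →
      ∀ (r r' : Matrix (Fin m) (Fin m) ℝ),
        r.PosDef → r * r = v → r'.PosDef → r' * r' = v' →
      ∀ L : Matrix (Fin m ⊕ Fin m) (Fin m ⊕ Fin m) ℝ,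
        Lᵀ = L →
        NormedSpace.exp L =
          (Matrix.fromBlocks r (u * r⁻¹) 0 r⁻¹)⁻¹ *
            (Matrix.fromBlocks r' (u' * r'⁻¹) 0 r'⁻¹) *
            (Matrix.fromBlocks r' (u' * r'⁻¹) 0 r'⁻¹)ᵀ *
            ((Matrix.fromBlocks r (u * r⁻¹) 0 r⁻¹)⁻¹)ᵀ →
        frobNorm L = c * dSH x y := by
  refine ⟨√2, by positivity, ?_⟩
  rintro u v u' v' hu hv hu' hv' _ _ rfl rfl r r' hr rfl hr' rfl L hL hexp
  exact quotient_norm_proportional_to_siegel_distance_general hu hv hu' hv'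
    (fromBlocks_mul_transpose_eq_siegelGram hu (isHermitian_iff_isSymm.mp hr.isHermitian))
    (fromBlocks_mul_transpose_eq_siegelGram hu' (isHermitian_iff_isSymm.mp hr'.isHermitian))
    hL hexp
end

section
/- Let n ≥ 1 and let g, h be invertible n×n real matrices. Then ‖log(g^{-1} h hᵀ g^{-ᵀ})‖ = ‖log(P^{-1/2} Q P^{-1/2})‖, where P = g gᵀ, Q = h hᵀ, P^{-1/2} is the inverse of the unique symmetric positive definite square root of P, and ‖·‖ is the Frobenius norm; i.e., the quotient-structure norm ‖⊖x ⊕ y‖_S on the SPD manifold GL_n/O_n equals the affine-invariant Riemannian distance between g gᵀ and h hᵀ. -/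
open Matrix

/-!
Two factorisations `g gᵀ = S Sᵀ` of the same matrix differ by the orthogonal matrix `U = g⁻¹ S`, and
`g⁻¹ Q g⁻ᵀ = U (S⁻¹ Q S⁻ᵀ) Uᵀ`. The exponential commutes with conjugation by `U` and is injective on
symmetric matrices, so the logarithms of the two sides are conjugate by `U` as well; the Frobenius
norm does not see this conjugation.
-/

section FrobNorm

variable {n : Type*} [Fintype n]

lemma frobNorm_transpose (A : Matrix n n ℝ) : frobNorm Aᵀ = frobNorm A := by
  rw [frobNorm, frobNorm, transpose_transpose, trace_mul_comm]

variable [DecidableEq n] {U : Matrix n n ℝ}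

lemma frobNorm_mem_orthogonalGroup_mul (hU : U ∈ orthogonalGroup n ℝ) (A : Matrix n n ℝ) :
    frobNorm (U * A) = frobNorm A := by
  have hgram : (U * A)ᵀ * (U * A) = Aᵀ * A := by
    rw [transpose_mul, Matrix.mul_assoc, ← Matrix.mul_assoc Uᵀ,
      (mem_orthogonalGroup_iff' n ℝ).1 hU, Matrix.one_mul]
  rw [frobNorm, frobNorm, hgram]

lemma frobNorm_orthogonal_conj (hU : U ∈ orthogonalGroup n ℝ) (A : Matrix n n ℝ) :
    frobNorm (U * A * Uᵀ) = frobNorm A :=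
  calc frobNorm (U * A * Uᵀ) = frobNorm (A * Uᵀ) := by
        rw [Matrix.mul_assoc, frobNorm_mem_orthogonalGroup_mul hU]
    _ = frobNorm (U * Aᵀ) := by rw [← frobNorm_transpose, transpose_mul, transpose_transpose]
    _ = frobNorm A := by rw [frobNorm_mem_orthogonalGroup_mul hU, frobNorm_transpose]

end FrobNorm

section Exp

variable {A : Type*} [NormedRing A] [StarRing A] [NormedAlgebra ℝ A]

lemma exp_injOn_isSelfAdjoint [ContinuousFunctionalCalculus ℝ A IsSelfAdjoint] :
    Set.InjOn NormedSpace.exp {a : A | IsSelfAdjoint a} :=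
  Set.LeftInvOn.injOn (f₁' := CFC.log) fun a ha => CFC.log_exp a ha

variable [CompleteSpace A] {u : A}

lemma exp_unitary_conj (hu : u ∈ unitary A) (a : A) :
    NormedSpace.exp (u * a * star u) = u * NormedSpace.exp a * star u :=
  let +nondep : NormedAlgebra ℚ A := .restrictScalars ℚ ℝ A
  NormedSpace.exp_units_conj (Unitary.toUnits ⟨u, hu⟩) a

lemma eq_unitary_conj_of_exp_eq [ContinuousFunctionalCalculus ℝ A IsSelfAdjoint] {a b : A}
    (hu : u ∈ unitary A) (ha : IsSelfAdjoint a) (hb : IsSelfAdjoint b)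
    (h : NormedSpace.exp a = u * NormedSpace.exp b * star u) : a = u * b * star u :=
  exp_injOn_isSelfAdjoint ha (hb.conjugate u) (h.trans (exp_unitary_conj hu b).symm)

end Exp

section Factor

variable {n α : Type*} [Fintype n] [DecidableEq n] [CommRing α] [StarRing α] {g s : Matrix n n α}

lemma inv_mul_mem_unitaryGroup_of_mul_conjTranspose_eq (hg : IsUnit g) (hs : s * sᴴ = g * gᴴ) :
    g⁻¹ * s ∈ unitaryGroup n α := by
  have hg_det : IsUnit g.det := (isUnit_iff_isUnit_det g).1 hg
  rw [mem_unitaryGroup_iff, star_eq_conjTranspose]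
  calc g⁻¹ * s * (g⁻¹ * s)ᴴ = g⁻¹ * (s * sᴴ) * (g⁻¹)ᴴ := by
        simp only [conjTranspose_mul, Matrix.mul_assoc]
    _ = (g⁻¹ * g) * (g⁻¹ * g)ᴴ := by
        rw [hs]; simp only [conjTranspose_mul, Matrix.mul_assoc]
    _ = 1 := by rw [nonsing_inv_mul g hg_det, conjTranspose_one, Matrix.one_mul]

lemma inv_mul_mul_conjTranspose_inv_eq_conj (hs : IsUnit s) (g Q : Matrix n n α) :
    g⁻¹ * Q * (g⁻¹)ᴴ = (g⁻¹ * s) * (s⁻¹ * Q * (s⁻¹)ᴴ) * (g⁻¹ * s)ᴴ := by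
  have hs_inv : s * s⁻¹ = 1 := mul_nonsing_inv s ((isUnit_iff_isUnit_det s).1 hs)
  calc g⁻¹ * Q * (g⁻¹)ᴴ = g⁻¹ * ((s * s⁻¹) * Q * (s * s⁻¹)ᴴ) * (g⁻¹)ᴴ := by
        rw [hs_inv, conjTranspose_one, Matrix.one_mul, Matrix.mul_one]
    _ = (g⁻¹ * s) * (s⁻¹ * Q * (s⁻¹)ᴴ) * (g⁻¹ * s)ᴴ := by
        simp only [conjTranspose_mul, Matrix.mul_assoc]

end Factor

open scoped Matrix.Norms.L2Operator in
lemma log_eq_unitary_conj {n 𝕜 : Type*} [Fintype n] [DecidableEq n] [RCLike 𝕜]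
    {g s Q L₁ L₂ : Matrix n n 𝕜} (hg : IsUnit g) (hs : s * sᴴ = g * gᴴ)
    (hL₁ : L₁.IsHermitian) (hexp₁ : NormedSpace.exp L₁ = g⁻¹ * Q * (g⁻¹)ᴴ)
    (hL₂ : L₂.IsHermitian) (hexp₂ : NormedSpace.exp L₂ = s⁻¹ * Q * (s⁻¹)ᴴ) :
    L₁ = (g⁻¹ * s) * L₂ * (g⁻¹ * s)ᴴ := by
  have hs_unit : IsUnit s := isUnit_of_mul_isUnit_left (hs ▸ hg.mul hg.star)
  -- `Matrix.Norms.L2Operator` provides a normed algebra over `𝕜` only, but the functional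
  -- calculus behind the logarithm uses real scalars.
  let : NormedAlgebra ℝ (Matrix n n 𝕜) :=
    { norm_smul_le r A := by simpa [← RCLike.real_smul_eq_coe_smul] using norm_smul_le (r : 𝕜) A }
  have hU : g⁻¹ * s ∈ unitaryGroup n 𝕜 := inv_mul_mem_unitaryGroup_of_mul_conjTranspose_eq hg hs
  refine eq_unitary_conj_of_exp_eq hU hL₁ hL₂ ?_
  rw [hexp₁, hexp₂]
  exact inv_mul_mul_conjTranspose_inv_eq_conj hs_unit g Q

theorem quotient_norm_eq_affine_invariant_distance_general {n : Type*} [Fintype n] [DecidableEq n]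
    {g S Q L₁ L₂ : Matrix n n ℝ} (hg : IsUnit g) (hS : S * Sᵀ = g * gᵀ)
    (hL₁ : L₁.IsSymm) (hexp₁ : NormedSpace.exp L₁ = g⁻¹ * Q * (g⁻¹)ᵀ)
    (hL₂ : L₂.IsSymm) (hexp₂ : NormedSpace.exp L₂ = S⁻¹ * Q * (S⁻¹)ᵀ) :
    frobNorm L₁ = frobNorm L₂ := by
  have hU : g⁻¹ * S ∈ orthogonalGroup n ℝ :=
    inv_mul_mem_unitaryGroup_of_mul_conjTranspose_eq hg hS
  have hconj : L₁ = (g⁻¹ * S) * L₂ * (g⁻¹ * S)ᵀ := log_eq_unitary_conj hg hS hL₁ hexp₁ hL₂ hexp₂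
  rw [hconj, frobNorm_orthogonal_conj hU]

/-- for invertible real matrices g, h, the quotient-structure
norm ‖log(g⁻¹ h hᵀ g⁻ᵀ)‖ equals the affine-invariant Riemannian distance
‖log(P^{-1/2} Q P^{-1/2})‖ between P = g gᵀ and Q = h hᵀ, where S = P^{1/2}
is the unique symmetric positive definite square root of P. -/
theorem quotient_norm_eq_affine_invariant_distance (n : ℕ) (hn : 1 ≤ n)
    (g h : Matrix (Fin n) (Fin n) ℝ) (hg : IsUnit g) (hh : IsUnit h)
    (S : Matrix (Fin n) (Fin n) ℝ) (hS : S.PosDef ∧ S * S = g * gᵀ)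
    (L₁ L₂ : Matrix (Fin n) (Fin n) ℝ)
    (hL₁ : L₁ᵀ = L₁ ∧ NormedSpace.exp L₁ = g⁻¹ * (h * hᵀ) * (g⁻¹)ᵀ)
    (hL₂ : L₂ᵀ = L₂ ∧ NormedSpace.exp L₂ = S⁻¹ * (h * hᵀ) * S⁻¹) :
    frobNorm L₁ = frobNorm L₂ := by
  have hSt : Sᵀ = S := hS.1.isHermitian
  exact quotient_norm_eq_affine_invariant_distance_general hg (by rw [hSt, hS.2]) hL₁.1 hL₁.2
    hL₂.1 (by rw [transpose_nonsing_inv, hSt, hL₂.2])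
end

section
/- Let m ≥ 1 and let S be a 2m×2m real symmetric positive definite matrix. Then S is symplectic (Sᵀ J S = J with J = [[0, I_m], [−I_m, 0]]) if and only if its principal logarithm V = log S is a symmetric matrix anticommuting with J, i.e., V J + J V = 0. In particular, the symmetric positive definite symplectic matrices are exactly the matrix exponentials of the linear subspace of symmetric matrices anticommuting with J. -/
open Matrix

/-- `J = [[0, I], [-I, 0]]`. -/
def Jmat (m : ℕ) : Matrix (Fin m ⊕ Fin m) (Fin m ⊕ Fin m) ℝ :=
  Matrix.fromBlocks 0 1 (-1) 0

/-!
For self-adjoint `V` with `S = exp V`, the equation `star S * J * S = J` says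
`J * exp (-V) = exp V * J`, and `V * J + J * V = 0` says `J * (-V) = V * J`. If `J` intertwines
two self-adjoint elements, it intertwines every continuous function of them, because it does so for
polynomials and these are uniformly dense. Applying this to the logarithm turns the first
intertwining relation into the second; the exponential series gives the converse.
-/

section ContinuousFunctionalCalculus

variable {𝕜 A : Type*} [RCLike 𝕜] {p : A → Prop} [Ring A] [StarRing A] [Algebra 𝕜 A]
  [TopologicalSpace A] [IsSemitopologicalRing A] [T2Space A]
  [ContinuousFunctionalCalculus 𝕜 A p] {a b x : A}

theorem semiconjBy_cfcHomSuperset {s : Set 𝕜} [CompactSpace s] (ha : p a) (hb : p b)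
    (hsa : spectrum 𝕜 a ⊆ s) (hsb : spectrum 𝕜 b ⊆ s) (h : SemiconjBy x a b)
    (h_star : SemiconjBy x (star a) (star b)) (f : C(s, 𝕜)) :
    SemiconjBy x (cfcHomSuperset ha hsa f) (cfcHomSuperset hb hsb f) := by
  induction f using ContinuousMap.induction_on_of_compact with
  | const r =>
    have map_const {c : A} (hc : p c) (hsc : spectrum 𝕜 c ⊆ s) :
        cfcHomSuperset hc hsc (.const s r) = algebraMap 𝕜 A r :=
      AlgHomClass.commutes (cfcHomSuperset hc hsc) r
    rw [map_const, map_const]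
    exact Algebra.commute_algebraMap_right r x
  | id => rwa [cfcHomSuperset_id, cfcHomSuperset_id]
  | star_id => rwa [map_star, map_star, cfcHomSuperset_id, cfcHomSuperset_id]
  | add f g hf hg => rw [map_add, map_add]; exact hf.add_right hg
  | mul f g hf hg => rw [map_mul, map_mul]; exact hf.mul_right hg
  | frequently f hf =>
    have cont_a := cfcHomSuperset_continuous ha hsa
    have cont_b := cfcHomSuperset_continuous hb hsb
    exact hf.mem_of_closed (isClosed_eq (cont_a.const_mul x) (cont_b.mul_const x))

theorem semiconjBy_cfc {f : 𝕜 → 𝕜} (ha : p a) (hb : p b)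
    (h : SemiconjBy x a b) (h_star : SemiconjBy x (star a) (star b))
    (hf : ContinuousOn f (spectrum 𝕜 a ∪ spectrum 𝕜 b)) :
    SemiconjBy x (cfc f a) (cfc f b) := by
  have : CompactSpace ↥(spectrum 𝕜 a ∪ spectrum 𝕜 b) := isCompact_iff_compactSpace.mp <|
    (ContinuousFunctionalCalculus.isCompact_spectrum a).union
      (ContinuousFunctionalCalculus.isCompact_spectrum b)
  have hsa := Set.subset_union_left (s := spectrum 𝕜 a) (t := spectrum 𝕜 b)
  have hsb := Set.subset_union_right (s := spectrum 𝕜 a) (t := spectrum 𝕜 b)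
  rw [cfc_apply f a ha (hf.mono hsa), cfc_apply f b hb (hf.mono hsb)]
  exact semiconjBy_cfcHomSuperset ha hb hsa hsb h h_star ⟨_, hf.domRestrict⟩

end ContinuousFunctionalCalculus

section Exponential

open NormedSpace (exp)

variable {A : Type*} [NormedRing A]

theorem exp_mul_mul_exp_eq_iff_semiconjBy [NormedAlgebra ℚ A] [CompleteSpace A] (v j : A) :
    exp v * j * exp v = j ↔ SemiconjBy j (exp (-v)) (exp v) := by
  let := NormedSpace.invertibleExp v
  rw [SemiconjBy, ← NormedSpace.invOf_exp, mul_invOf_eq_iff_eq_mul_right, eq_comm]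

variable [StarRing A] [NormedAlgebra ℝ A] [ContinuousFunctionalCalculus ℝ A IsSelfAdjoint]

theorem pos_of_mem_spectrum_exp {a : A} (ha : IsSelfAdjoint a) {r : ℝ}
    (hr : r ∈ spectrum ℝ (exp a)) : 0 < r := by
  rw [← CFC.real_exp_eq_normedSpace_exp ha, cfc_map_spectrum Real.exp a] at hr
  obtain ⟨t, -, rfl⟩ := hr
  exact Real.exp_pos t

variable [CompleteSpace A] [ContinuousStar A]

theorem semiconjBy_exp_iff {a b x : A} (ha : IsSelfAdjoint a) (hb : IsSelfAdjoint b) :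
    SemiconjBy x (exp a) (exp b) ↔ SemiconjBy x a b := by
  let := NormedAlgebra.restrictScalars ℚ ℝ A
  refine ⟨fun h ↦ ?_, SemiconjBy.exp_right⟩
  have log_cont : ContinuousOn Real.log (spectrum ℝ (exp a) ∪ spectrum ℝ (exp b)) :=
    Real.continuousOn_log.mono <| Set.union_subset
      (fun _ hr ↦ (pos_of_mem_spectrum_exp ha hr).ne')
      (fun _ hr ↦ (pos_of_mem_spectrum_exp hb hr).ne')
  have h_star : SemiconjBy x (star (exp a)) (star (exp b)) := by
    rwa [ha.exp.star_eq, hb.exp.star_eq]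
  rw [← CFC.log_exp a ha, ← CFC.log_exp b hb]
  exact semiconjBy_cfc ha.exp hb.exp h h_star log_cont

theorem spd_symplectic_iff_log_anticommutes_general (J : A) {S V : A} (hV : IsSelfAdjoint V)
    (hS : exp V = S) :
    star S * J * S = J ↔ V * J + J * V = 0 := by
  let := NormedAlgebra.restrictScalars ℚ ℝ A
  calc star S * J * S = J
    _ ↔ exp V * J * exp V = J := by rw [← hS, hV.exp.star_eq]
    _ ↔ SemiconjBy J (exp (-V)) (exp V) := exp_mul_mul_exp_eq_iff_semiconjBy V J
    _ ↔ SemiconjBy J (-V) V := semiconjBy_exp_iff hV.neg hV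
    _ ↔ V * J + J * V = 0 := by
      rw [SemiconjBy, mul_neg, neg_eq_iff_add_eq_zero, add_comm]

end Exponential

/-- a symmetric positive definite 2m×2m matrix S is symplectic
iff its principal logarithm V (the unique symmetric matrix with exp V = S)
anticommutes with J. -/
theorem spd_symplectic_iff_log_anticommutes (m : ℕ) (hm : 1 ≤ m)
    (S : Matrix (Fin m ⊕ Fin m) (Fin m ⊕ Fin m) ℝ) (hS : S.PosDef)
    (V : Matrix (Fin m ⊕ Fin m) (Fin m ⊕ Fin m) ℝ)
    (hV : Vᵀ = V ∧ NormedSpace.exp V = S) :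
    Sᵀ * Jmat m * S = Jmat m ↔ V * Jmat m + Jmat m * V = 0 := by
  open scoped Matrix.Norms.L2Operator in
  rw [← conjTranspose_eq_transpose_of_trivial] at hV ⊢
  exact spd_symplectic_iff_log_anticommutes_general (Jmat m) hV.1 hV.2
end
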